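/- Let H be an affine quasi-hereditary algebra over a field k with property (♠) and finite index poset (Π, ≤). For π ∈ Π, let F_π(Δ) be the full subcategory of modules V with a Δ-filtration satisfying (V:Δ(π)) = 1 and (V:Δ(σ)) = 0 for all σ ≰ π, and let T_π be the full subcategory of tilting modules satisfying the same multiplicity conditions. Then every V ∈ F_π(Δ) admits an embedding V ↪ T into some tilting module T ∈ T_π. -/

import Mathlib

/-!
The space `ext¹(Δ(σ), X)` is the obstruction to extending homogeneous maps `f : K(σ) → X`, where
`K(σ) = ker (P(σ) → Δ(σ))`, to `P(σ)`; everything below is phrased in these terms. A module with a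
`Δ`-filtration is tilting as soon as all these obstructions vanish, and they can be killed by
adding finitely many copies of `Δ(σ)` with `σ < π`. So the proof has two halves.

*Universal extensions.* By `(♠)`, `H` is finite over a commutative Noetherian ring mapping to its
centre (`Tilt.central_finite`), hence the homogeneous maps `K(σ) → X` are combinations, with
central coefficients, of finitely many of them (`Tilt.hom_finite`). Pushing out along these finitely
many maps embeds `X` in a module `E` with `E / X` filtered by copies of `Δ(σ)` and with
`ext¹(Δ(σ), E) = 0`. Since `K(σ)` is built from `Δ(τ)`, `τ > σ`, the new copies of `Δ(σ)` do not
create extensions by `Δ(σ')` unless `σ' < σ`, so one works through the poset from the top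
downwards (`Tilt.universal_ext`, `Tilt.iterated_ext`). For `V ∈ F_π(Δ)` nothing has to be done
unless `σ < π`, because `hom(P(τ), V) = 0` for `τ ≰ π`. Hence the multiplicity conditions persist.

*Existence of a `∇̄`-filtration.* Suppose `ext¹(Δ(σ), X) = 0` for all `σ` and `X ≠ 0`. Weights on
the poset are chosen which grow faster than all relevant degree bounds (`Tilt.Bounds`), and a
nonzero map `φ : P(π) → X` of minimal weighted degree is considered. It factors through `Δ(π)`, and if
`N ⊆ X` is maximal among the graded submodules not containing the image of `φ`, then `X / N ≅ ∇̄(π)`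
up to shift and `N` again has vanishing `ext¹(Δ(σ), N)` (`Tilt.one_step`). Iterating gives a
filtration with `∇̄` layers. It is separated, since each step removes an element of degree bounded in
terms of any given nonzero map from a projective to the current submodule, and the part of `X` of
bounded degree is finite-dimensional (`Tilt.good_imp_pcFilt`).
-/


open CategoryTheory

/-! ## Graded algebras (Laurentian) and the category `H`-gmod -/

/-- A `ℤ`-graded `k`-algebra. -/
structure GAlg (k : Type) [Field k] : Type 1 where
  carrier : Type
  [ring : Ring carrier]
  [alg : Algebra k carrier]
  grading : ℤ → Submodule k carrier
  internal : DirectSum.IsInternal grading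
  one_mem : (1 : carrier) ∈ grading 0
  mul_mem : ∀ {i j : ℤ} {a b : carrier},
    a ∈ grading i → b ∈ grading j → a * b ∈ grading (i + j)

attribute [instance] GAlg.ring GAlg.alg

variable {k : Type} [Field k]

namespace GAlg

/-- A graded algebra is Laurentian if the grading is bounded below and has
finite-dimensional components. -/
def Laurentian (A : GAlg k) : Prop :=
  (∃ N : ℤ, ∀ n : ℤ, n < N → A.grading n = ⊥) ∧
    ∀ n : ℤ, FiniteDimensional k (A.grading n)

/-- Property `(♠)`: there is a central `ℤ≥0`-graded subalgebra `Z ⊆ H_{≥0}` with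
`Z₀ = k·1` such that `H` is finitely generated as a `Z`-module. -/
def Spade (A : GAlg k) : Prop :=
  ∃ Z : ℤ → Submodule k A.carrier,
    (∀ n, Z n ≤ A.grading n) ∧
    (∀ n : ℤ, n < 0 → Z n = ⊥) ∧
    (Z 0 = Submodule.span k {(1 : A.carrier)}) ∧
    (∀ (i j : ℤ) (a b : A.carrier), a ∈ Z i → b ∈ Z j → a * b ∈ Z (i + j)) ∧
    (∀ (i : ℤ) (a : A.carrier), a ∈ Z i → ∀ h : A.carrier, a * h = h * a) ∧
    (∃ s : Finset A.carrier,
      AddSubgroup.closure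
        {x : A.carrier | ∃ i : ℤ, ∃ z ∈ Z i, ∃ t ∈ s, x = z * t} = ⊤)

end GAlg

/-- A finitely generated graded module over a graded algebra. -/
structure GMod (A : GAlg k) : Type 1 where
  carrier : Type
  [acg : AddCommGroup carrier]
  [mod : Module A.carrier carrier]
  [kmod : Module k carrier]
  [tower : IsScalarTower k A.carrier carrier]
  [scc : SMulCommClass k A.carrier carrier]
  grading : ℤ → Submodule k carrier
  internal : DirectSum.IsInternal grading
  smul_mem : ∀ {i j : ℤ} {a : A.carrier} {x : carrier},
    a ∈ A.grading i → x ∈ grading j → a • x ∈ grading (i + j)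
  fg : Module.Finite A.carrier carrier

attribute [instance] GMod.acg GMod.mod GMod.kmod GMod.tower GMod.scc

variable {A : GAlg k}

/-- The category `H`-gmod : morphisms are degree-preserving `H`-linear maps. -/
instance GMod.instCategory : Category (GMod A) where
  Hom M N := {f : M.carrier →ₗ[A.carrier] N.carrier //
    ∀ (i : ℤ) (x : M.carrier), x ∈ M.grading i → f x ∈ N.grading i}
  id M := ⟨LinearMap.id, fun _ _ h => h⟩
  comp f g := ⟨g.1.comp f.1, fun i x h => g.2 i _ (f.2 i x h)⟩
  id_comp f := Subtype.ext (LinearMap.ext fun _ => rfl)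
  comp_id f := Subtype.ext (LinearMap.ext fun _ => rfl)
  assoc f g h := Subtype.ext (LinearMap.ext fun _ => rfl)

/-- The grading shift `q^n`. -/
def GMod.shift (n : ℤ) (M : GMod A) : GMod A where
  carrier := M.carrier
  grading := fun i => M.grading (i - n)
  internal := by
    have h := (DirectSum.isInternal_submodule_iff_iSupIndep_and_iSup_eq_top
      M.grading).mp M.internal
    rw [DirectSum.isInternal_submodule_iff_iSupIndep_and_iSup_eq_top]
    refine ⟨h.1.comp (f := fun i : ℤ => i - n)
      (fun a b hab => by simp only [] at hab; omega), ?_⟩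
    refine le_antisymm le_top ?_
    rw [← h.2]
    refine iSup_le fun i => ?_
    have hg : M.grading i = M.grading ((i + n) - n) := by norm_num
    rw [hg]
    exact le_iSup (fun j : ℤ => M.grading (j - n)) (i + n)
  smul_mem := fun {i j a x} ha hx => by
    have h := M.smul_mem ha hx
    have : i + (j - n) = (i + j) - n := by ring
    simpa [this] using h
  fg := M.fg

/-- The grading shift as a (graded) functor. -/
def shiftF (A : GAlg k) (n : ℤ) : GMod A ⥤ GMod A where
  obj M := GMod.shift n M
  map f := ⟨f.1, fun i x h => f.2 (i - n) x h⟩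

/-- Isomorphism in `H`-gmod, concretely. -/
structure GIso (M N : GMod A) where
  e : M.carrier ≃ₗ[A.carrier] N.carrier
  mem : ∀ (i : ℤ) (x : M.carrier), x ∈ M.grading i → e x ∈ N.grading i
  mem' : ∀ (i : ℤ) (y : N.carrier), y ∈ N.grading i → e.symm y ∈ M.grading i

/-- A graded (homogeneous) submodule. -/
def GMod.IsGSub (M : GMod A) (W : Submodule A.carrier M.carrier) : Prop :=
  W.restrictScalars k = ⨆ i : ℤ, (W.restrictScalars k ⊓ M.grading i)

/-- The subquotient `W/W'` of a graded module. -/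
abbrev sqMod (M : GMod A) (W W' : Submodule A.carrier M.carrier) : Type :=
  W ⧸ (W'.comap W.subtype)

/-- The induced grading on a subquotient. -/
abbrev sqGrading (M : GMod A) (W W' : Submodule A.carrier M.carrier) (i : ℤ) :
    Submodule k (sqMod M W W') :=
  ((M.grading i).comap ((W.subtype).restrictScalars k)).map
    (((W'.comap W.subtype).mkQ).restrictScalars k)

/-- The subquotient `W/W'` is isomorphic, as a graded module, to `N`. -/
def SQIso (M : GMod A) (W W' : Submodule A.carrier M.carrier) (N : GMod A) : Prop :=
  ∃ e : (sqMod M W W') ≃ₗ[A.carrier] N.carrier,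
    ∀ i : ℤ, (sqGrading M W W' i).map
      ((e : sqMod M W W' →ₗ[A.carrier] N.carrier).restrictScalars k) = N.grading i

/-- A separated filtration by graded submodules. -/
structure GFilt (M : GMod A) where
  F : ℕ → Submodule A.carrier M.carrier
  first : F 0 = ⊤
  anti : ∀ n, F (n + 1) ≤ F n
  graded : ∀ n, M.IsGSub (F n)
  separated : ∀ x : M.carrier, (∀ n, x ∈ F n) → x = 0

/-- The filtration `Φ` has all subquotients zero or of the form `q^d N` with
`N` in the family `S`. -/
def FiltBy (M : GMod A) (Φ : GFilt M) (S : Set (GMod A)) : Prop :=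
  ∀ n : ℕ, Subsingleton (sqMod M (Φ.F n) (Φ.F (n + 1))) ∨
    ∃ N ∈ S, ∃ d : ℤ, SQIso M (Φ.F n) (Φ.F (n + 1)) (GMod.shift d N)

/-- Homogeneous (degree `d`) `H`-linear maps. -/
def ghomSet (M N : GMod A) (d : ℤ) : Set (M.carrier →ₗ[A.carrier] N.carrier) :=
  {f | ∀ (i : ℤ) (x : M.carrier), x ∈ M.grading i → f x ∈ N.grading (i + d)}

/-- Homogeneous degree `d` maps as a `k`-submodule of all `H`-linear maps. -/
def ghomSub (M N : GMod A) (d : ℤ) :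
    Submodule k (M.carrier →ₗ[A.carrier] N.carrier) where
  carrier := ghomSet M N d
  add_mem' := fun hf hg i x hx => (N.grading (i + d)).add_mem (hf i x hx) (hg i x hx)
  zero_mem' := fun i x _ => (N.grading (i + d)).zero_mem
  smul_mem' := fun c f hf i x hx => by
    simpa using (N.grading (i + d)).smul_mem c (hf i x hx)

/-- A graded-simple module. -/
def IsGSimple (M : GMod A) : Prop :=
  Nontrivial M.carrier ∧
    ∀ W : Submodule A.carrier M.carrier, M.IsGSub W → W = ⊥ ∨ W = ⊤

/-- Graded projectivity. -/
def GProjective (P : GMod A) : Prop :=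
  ∀ (M N : GMod A) (g : M ⟶ N) (h : P ⟶ N),
    Function.Surjective g.1 → ∃ l : P ⟶ M, l ≫ g = h

/-- Vanishing of all (graded) `ext¹` groups `ext¹(U, V) = ⊕ₙ Ext¹(qⁿU, V) = 0`:
every extension of a shift of `U` by `V` splits. -/
def Ext1Vanish (U V : GMod A) : Prop :=
  ∀ (n : ℤ) (E : GMod A) (f : V ⟶ E) (g : E ⟶ GMod.shift n U),
    Function.Injective f.1 → Function.Surjective g.1 →
    LinearMap.range f.1 = LinearMap.ker g.1 →
    ∃ s : GMod.shift n U ⟶ E, s ≫ g = 𝟙 (GMod.shift n U)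

/-- The structure of an affine highest weight category on `H`-gmod, i.e. an
affine quasi-hereditary structure on `H` (Kleshchev).  The proper costandard
objects are axiomatised through their homological characterisation. -/
structure AHW (A : GAlg k) (Idx : Type) [Fintype Idx] [PartialOrder Idx] :
    Type 1 where
  /-- simple objects -/
  L : Idx → GMod A
  /-- projective covers -/
  P : Idx → GMod A
  /-- standard objects -/
  Δ : Idx → GMod A
  /-- proper costandard objects -/
  pco : Idx → GMod A
  noeth : IsNoetherianRing A.carrier
  laur : A.Laurentian
  simple : ∀ π, IsGSimple (L π)
  simple_complete : ∀ S : GMod A, IsGSimple S →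
    ∃ (π : Idx) (d : ℤ), Nonempty (GIso S (GMod.shift d (L π)))
  simple_irred : ∀ (π σ : Idx) (d : ℤ),
    Nonempty (GIso (L π) (GMod.shift d (L σ))) → π = σ
  proj : ∀ π, GProjective (P π)
  cover : ∀ π, ∃ p : P π ⟶ L π, Function.Surjective p.1 ∧
    ∀ W : Submodule A.carrier (P π).carrier, (P π).IsGSub W →
      W ⊔ LinearMap.ker p.1 = ⊤ → W = ⊤
  /-- `Δ(π) = P(π)/(Σ images of graded maps from P(σ), σ ≰ π)` -/
  std_def : ∀ π, ∃ dm : P π ⟶ Δ π, Function.Surjective dm.1 ∧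
    LinearMap.ker dm.1 =
      ⨆ (p : Σ σ : Idx, (P σ).carrier →ₗ[A.carrier] (P π).carrier)
        (_ : ¬ p.1 ≤ π) (_ : ∃ d, p.2 ∈ ghomSet (P p.1) (P π) d),
          LinearMap.range p.2
  /-- the kernel of `P(π) ↠ Δ(π)` is filtered by shifts of `Δ(σ)`, `σ > π` -/
  ker_filt : ∀ π, ∃ Φ : GFilt (P π), (∃ N, Φ.F N = ⊥) ∧
    SQIso (P π) (Φ.F 0) (Φ.F 1) (Δ π) ∧
    ∀ n : ℕ, 1 ≤ n →
      (Subsingleton (sqMod (P π) (Φ.F n) (Φ.F (n + 1))) ∨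
        ∃ σ : Idx, π < σ ∧ ∃ d : ℤ,
          SQIso (P π) (Φ.F n) (Φ.F (n + 1)) (GMod.shift d (Δ σ)))
  /-- `B_π = end(Δ(π))` is a graded polynomial ring on homogeneous generators
  of positive degree -/
  end_poly : ∀ π, ∃ (nv : ℕ) (dg : Fin nv → ℤ),
    (∀ i, 0 < dg i) ∧
    ∃ e : MvPolynomial (Fin nv) k →ₐ[k] Module.End A.carrier (Δ π).carrier,
      Function.Bijective e ∧
      ∀ i, (e (MvPolynomial.X i) :
        (Δ π).carrier →ₗ[A.carrier] (Δ π).carrier) ∈ ghomSet (Δ π) (Δ π) (dg i)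
  /-- `hom(P(π), Δ(σ))` is a graded free `B_σ`-module of finite rank -/
  hom_free : ∀ π σ, ∃ (mr : ℕ)
    (b : Fin mr → ((P π).carrier →ₗ[A.carrier] (Δ σ).carrier))
    (db : Fin mr → ℤ),
    (∀ i, b i ∈ ghomSet (P π) (Δ σ) (db i)) ∧
    Function.Bijective (fun c : Fin mr → Module.End A.carrier (Δ σ).carrier =>
      ∑ i, LinearMap.comp (c i : (Δ σ).carrier →ₗ[A.carrier] (Δ σ).carrier) (b i))
  /-- the proper costandard objects have finite length … -/
  pco_finlen : ∀ π, IsFiniteLength A.carrier (pco π).carrier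
  /-- … and satisfy `hom(Δ(σ), ∇̄(π)) = δ_{σπ} k` concentrated in degree 0 … -/
  pco_hom : ∀ π, ∃ f₀ : (Δ π).carrier →ₗ[A.carrier] (pco π).carrier,
    f₀ ∈ ghomSet (Δ π) (pco π) 0 ∧ f₀ ≠ 0 ∧
    (∀ (d : ℤ) (f : (Δ π).carrier →ₗ[A.carrier] (pco π).carrier),
      f ∈ ghomSet (Δ π) (pco π) d → ∃ c : k, f = c • f₀) ∧
    ∀ (σ : Idx) (d : ℤ) (f : (Δ σ).carrier →ₗ[A.carrier] (pco π).carrier),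
      f ∈ ghomSet (Δ σ) (pco π) d → σ ≠ π → f = 0
  /-- … and `ext¹(Δ(σ), ∇̄(π)) = 0` -/
  pco_ext : ∀ π σ, Ext1Vanish (Δ σ) (pco π)

variable {Idx : Type} [Fintype Idx] [PartialOrder Idx]

/-- `V` has a `Δ`-filtration. -/
def HasDFilt (S : AHW A Idx) (M : GMod A) : Prop :=
  ∃ Φ : GFilt M, FiltBy M Φ (Set.range S.Δ)

/-- `V` has a `∇̄`-filtration. -/
def HasPCFilt (S : AHW A Idx) (M : GMod A) : Prop :=
  ∃ Φ : GFilt M, FiltBy M Φ (Set.range S.pco)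

/-- Tilting modules. -/
def IsTilting (S : AHW A Idx) (M : GMod A) : Prop :=
  HasDFilt S M ∧ HasPCFilt S M

/-- The multiplicity `(V : Δ(π))` of `Δ(π)` in a given `Δ`-filtration. -/
noncomputable def dMult (S : AHW A Idx) {M : GMod A} (Φ : GFilt M) (π : Idx) : ℕ :=
  Set.ncard {n : ℕ | ∃ d : ℤ,
    SQIso M (Φ.F n) (Φ.F (n + 1)) (GMod.shift d (S.Δ π))}

/-- `V` admits a (finite) `Δ`-filtration with `(V:Δ(π)) = 1` and `(V:Δ(σ)) = 0`
for `σ ≰ π`. -/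
def MultCond (S : AHW A Idx) (M : GMod A) (π : Idx) : Prop :=
  ∃ Φ : GFilt M, FiltBy M Φ (Set.range S.Δ) ∧ (∃ N, Φ.F N = ⊥) ∧
    dMult S Φ π = 1 ∧ ∀ σ : Idx, ¬ σ ≤ π → dMult S Φ σ = 0

/-- Indecomposability (no nontrivial graded idempotent endomorphism). -/
def Indec (M : GMod A) : Prop :=
  Nontrivial M.carrier ∧
    ∀ e : M ⟶ M, e ≫ e = e → e.1 = 0 ∨ e.1 = LinearMap.id

/-- A short exact sequence in `H`-gmod. -/
def SES {X Y Z : GMod A} (f : X ⟶ Y) (g : Y ⟶ Z) : Prop :=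
  Function.Injective f.1 ∧ Function.Surjective g.1 ∧
    LinearMap.range f.1 = LinearMap.ker g.1

namespace Tilt

/-! ### Homogeneous components and graded submodules -/

/-- A graded module is the direct sum of its components. -/
noncomputable def dec (M : GMod A) : (DirectSum ℤ fun i => M.grading i) ≃ₗ[k] M.carrier :=
  LinearEquiv.ofBijective (DirectSum.coeLinearMap M.grading)
    (show Function.Bijective (DirectSum.coeLinearMap M.grading) from M.internal)

/-- The projection of a graded module onto its component of degree `n`. -/
noncomputable def pr (M : GMod A) (n : ℤ) : M.carrier →ₗ[k] M.carrier :=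
  (M.grading n).subtype ∘ₗ DirectSum.component k ℤ (fun i => M.grading i) n ∘ₗ
    (dec M).symm.toLinearMap

lemma pr_mem (M : GMod A) (n : ℤ) (x : M.carrier) : pr M n x ∈ M.grading n := by
  exact Subtype.property _

lemma symm_of_mem (M : GMod A) {i : ℤ} {x : M.carrier} (hx : x ∈ M.grading i) :
    (dec M).symm x =
      DirectSum.lof k ℤ (fun i => M.grading i) i ⟨x, hx⟩ := by
  rw [LinearEquiv.symm_apply_eq]
  exact (DirectSum.coeLinearMap_lof M.grading i ⟨x, hx⟩).symm

lemma pr_of_mem (M : GMod A) {i : ℤ} {x : M.carrier} (hx : x ∈ M.grading i) :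
    pr M i x = x := by
  simp [pr, symm_of_mem M hx, DirectSum.component.lof_self]

lemma pr_of_ne (M : GMod A) {i j : ℤ} {x : M.carrier} (hx : x ∈ M.grading i) (h : i ≠ j) :
    pr M j x = 0 := by
  simp [pr, symm_of_mem M hx, DirectSum.component.of, h]

lemma sup_top (M : GMod A) : (⨆ i, M.grading i) = ⊤ :=
  ((DirectSum.isInternal_submodule_iff_iSupIndep_and_iSup_eq_top M.grading).mp M.internal).2

lemma hom_ind (M : GMod A) {p : M.carrier → Prop} (h0 : p 0)
    (hh : ∀ i x, x ∈ M.grading i → p x) (ha : ∀ x y, p x → p y → p (x + y)) (x : M.carrier) :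
    p x := by
  have hx : x ∈ ⨆ i, M.grading i := by rw [sup_top]; trivial
  exact Submodule.iSup_induction _ (motive := p) hx hh h0 ha

/-- An additive submonoid containing all components of `x` contains `x`. -/
lemma mem_of_pr (M : GMod A) (W : AddSubmonoid M.carrier) {x : M.carrier}
    (h : ∀ i, pr M i x ∈ W) : x ∈ W := by
  have key : ∀ x : M.carrier, ∃ s : Finset ℤ, x = ∑ i ∈ s, pr M i x := by
    intro x
    let v := (dec M).symm x
    classical
    refine ⟨DFinsupp.support v, ?_⟩
    have hv : x = DirectSum.coeLinearMap M.grading v := by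
      exact ((dec M).apply_symm_apply x).symm
    conv_lhs => rw [hv, DirectSum.coeLinearMap_eq_dfinsuppSum]
    rfl
  obtain ⟨s, hs⟩ := key x
  rw [hs]
  exact sum_mem fun i _ => h i

lemma eq_zero_of_pr (M : GMod A) {x : M.carrier} (h : ∀ i, pr M i x = 0) : x = 0 := by
  have := mem_of_pr M ⊥ (x := x) (by simpa using h)
  simpa using this

lemma pr_map {M N : GMod A} {f : M.carrier →ₗ[A.carrier] N.carrier} {d : ℤ}
    (hf : f ∈ ghomSet M N d) (i : ℤ) (x : M.carrier) : f (pr M i x) = pr N (i + d) (f x) := by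
  induction x using hom_ind with
  | h0 => simp
  | ha x y hx hy => simp [hx, hy]
  | hh j x hx =>
    by_cases h : j = i
    · subst h; rw [pr_of_mem M hx, pr_of_mem N (hf _ _ hx)]
    · rw [pr_of_ne M hx h, pr_of_ne N (hf _ _ hx) (by omega), map_zero]

lemma pr_smul (M : GMod A) {i : ℤ} {a : A.carrier} (ha : a ∈ A.grading i) (j : ℤ)
    (x : M.carrier) : pr M (i + j) (a • x) = a • pr M j x := by
  induction x using hom_ind with
  | h0 => simp
  | ha x y hx hy => simp [hx, hy]
  | hh l x hx =>
    by_cases h : l = j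
    · subst h; rw [pr_of_mem M hx, pr_of_mem M (M.smul_mem ha hx)]
    · rw [pr_of_ne M hx h, pr_of_ne M (M.smul_mem ha hx) (by omega), smul_zero]

/-- Stability under taking homogeneous components; equivalent to `GMod.IsGSub`. -/
def Gr (M : GMod A) (W : Submodule A.carrier M.carrier) : Prop :=
  ∀ i x, x ∈ W → pr M i x ∈ W

lemma gr_iff {M : GMod A} {W : Submodule A.carrier M.carrier} : M.IsGSub W ↔ Gr M W := by
  constructor
  · intro h i x hx
    have hx' : x ∈ W.restrictScalars k := hx
    rw [h] at hx'
    refine Submodule.iSup_induction _ (motive := fun x => pr M i x ∈ W) hx' ?_ (by simp) ?_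
    · rintro j y ⟨hy, hyj⟩
      by_cases hij : j = i
      · subst hij; rw [pr_of_mem M hyj]; exact hy
      · rw [pr_of_ne M hyj hij]; exact W.zero_mem
    · intro x y hx hy; rw [map_add]; exact W.add_mem hx hy
  · intro h
    apply le_antisymm
    · intro x hx
      refine mem_of_pr M (⨆ i : ℤ, (W.restrictScalars k ⊓ M.grading i)).toAddSubmonoid fun i => ?_
      exact Submodule.mem_iSup_of_mem i ⟨h i x hx, pr_mem M i x⟩
    · exact iSup_le fun i => inf_le_left

lemma Gr.bot (M : GMod A) : Gr M ⊥ := by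
  intro i x hx
  rw [Submodule.mem_bot] at *; simp [hx]

lemma Gr.top (M : GMod A) : Gr M ⊤ := fun _ _ _ => trivial

lemma Gr.sup {M : GMod A} {V W : Submodule A.carrier M.carrier} (hV : Gr M V) (hW : Gr M W) :
    Gr M (V ⊔ W) := by
  intro i x hx
  obtain ⟨y, hy, z, hz, rfl⟩ := Submodule.mem_sup.1 hx
  rw [map_add]
  exact Submodule.add_mem_sup (hV i y hy) (hW i z hz)

lemma Gr.map {M N : GMod A} {W : Submodule A.carrier M.carrier} (hW : Gr M W) {d : ℤ}
    {f : M.carrier →ₗ[A.carrier] N.carrier} (hf : f ∈ ghomSet M N d) : Gr N (W.map f) := by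
  rintro i _ ⟨x, hx, rfl⟩
  refine ⟨pr M (i - d) x, hW _ _ hx, ?_⟩
  rw [pr_map hf]; simp

lemma Gr.comap {M N : GMod A} {W : Submodule A.carrier N.carrier} (hW : Gr N W) {d : ℤ}
    {f : M.carrier →ₗ[A.carrier] N.carrier} (hf : f ∈ ghomSet M N d) : Gr M (W.comap f) := by
  intro i x hx
  rw [Submodule.mem_comap, pr_map hf]; exact hW _ _ hx

lemma Gr.range {M N : GMod A} {d : ℤ}
    {f : M.carrier →ₗ[A.carrier] N.carrier} (hf : f ∈ ghomSet M N d) :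
    Gr N (LinearMap.range f) := by
  rw [LinearMap.range_eq_map]; exact (Gr.top M).map hf

lemma Gr.ker {M N : GMod A} {d : ℤ}
    {f : M.carrier →ₗ[A.carrier] N.carrier} (hf : f ∈ ghomSet M N d) :
    Gr M (LinearMap.ker f) := (Gr.bot N).comap hf

/-! ### Constructions of graded modules -/

lemma internal_of_proj {Y : Type} [AddCommGroup Y] [Module k Y] (G : ℤ → Submodule k Y)
    (p : ℤ → Y →ₗ[k] Y) (h1 : ∀ i y, y ∈ G i → p i y = y)
    (h2 : ∀ i j y, i ≠ j → y ∈ G i → p j y = 0) (h3 : ∀ y, y ∈ ⨆ i, G i) :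
    DirectSum.IsInternal G := by
  rw [DirectSum.isInternal_submodule_iff_iSupIndep_and_iSup_eq_top]
  refine ⟨?_, eq_top_iff.2 fun y _ => h3 y⟩
  rw [iSupIndep_def]
  intro i
  rw [Submodule.disjoint_def]
  intro x hx hx'
  have : (⨆ j, ⨆ (_ : j ≠ i), G j) ≤ LinearMap.ker (p i) :=
    iSup₂_le fun j hj y hy => h2 j i y hj hy
  rw [← h1 i x hx]
  exact this hx'

/-- A graded submodule of a finitely generated graded module over a Noetherian algebra. -/
abbrev sub [IsNoetherianRing A.carrier] (M : GMod A) (W : Submodule A.carrier M.carrier)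
    (hW : Gr M W) : GMod A where
  carrier := W
  kmod := inferInstanceAs (Module k (W.restrictScalars k))
  tower := ⟨fun a b x => Subtype.ext (smul_assoc a b x.1)⟩
  scc := ⟨fun a b x => Subtype.ext (smul_comm a b x.1)⟩
  grading i := (M.grading i).comap (W.restrictScalars k).subtype
  internal := by
    refine internal_of_proj (Y := W.restrictScalars k)
      (fun i => (M.grading i).comap (W.restrictScalars k).subtype)
      (fun i => ((pr M i).restrict (fun x hx => hW i x hx) :
        W.restrictScalars k →ₗ[k] W.restrictScalars k)) ?_ ?_ ?_
    · intro i y hy; exact Subtype.ext (pr_of_mem M hy)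
    · intro i j y hij hy; exact Subtype.ext (pr_of_ne M hy hij)
    · intro y
      have : y.1 ∈ (⨆ i, (M.grading i).comap (W.restrictScalars k).subtype).map
          (W.restrictScalars k).subtype := by
        refine mem_of_pr M (Submodule.map _ _).toAddSubmonoid fun i => ?_
        exact ⟨⟨_, hW i y.1 y.2⟩, Submodule.mem_iSup_of_mem i (pr_mem M i y.1), rfl⟩
      obtain ⟨z, hz, hzy⟩ := this
      have : z = y := Subtype.ext hzy
      exact this ▸ hz
  smul_mem := fun ha hx => M.smul_mem ha hx
  fg := by
    have := M.fg
    infer_instance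

/-- The quotient of a graded module by a graded submodule. -/
abbrev quot (M : GMod A) (W : Submodule A.carrier M.carrier) (hW : Gr M W) : GMod A where
  carrier := M.carrier ⧸ W
  grading i := (M.grading i).map (W.mkQ.restrictScalars k)
  internal := by
    rw [DirectSum.isInternal_submodule_iff_iSupIndep_and_iSup_eq_top]
    constructor
    · rw [iSupIndep_def]
      intro i
      rw [Submodule.disjoint_def]
      rintro _ ⟨a, ha, rfl⟩ hx
      simp only [← Submodule.map_iSup] at hx
      obtain ⟨b, hb, hab⟩ := hx
      have hb' : pr M i b = 0 := by
        have : (⨆ j, ⨆ (_ : j ≠ i), M.grading j) ≤ LinearMap.ker (pr M i) :=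
          iSup₂_le fun j hj y hy => pr_of_ne M hy hj
        exact this hb
      have h1 : b - a ∈ W := (Submodule.Quotient.eq W).1 hab
      have h2 := hW i _ h1
      rw [map_sub, hb', pr_of_mem M ha, zero_sub, neg_mem_iff] at h2
      exact (Submodule.Quotient.mk_eq_zero W).2 h2
    · rw [← Submodule.map_iSup, sup_top, Submodule.map_top, LinearMap.range_eq_top]
      exact W.mkQ_surjective
  smul_mem := by
    rintro i j a _ ha ⟨x, hx, rfl⟩
    exact ⟨a • x, M.smul_mem ha hx, by simp⟩
  fg := by
    have := M.fg
    infer_instance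

/-- The direct sum of two graded modules. -/
abbrev prod (M N : GMod A) : GMod A where
  carrier := M.carrier × N.carrier
  grading i := (M.grading i).prod (N.grading i)
  internal := by
    refine internal_of_proj _ (fun i => (pr M i).prodMap (pr N i)) ?_ ?_ ?_
    · rintro i ⟨x, y⟩ ⟨hx, hy⟩
      exact Prod.ext (pr_of_mem M hx) (pr_of_mem N hy)
    · rintro i j ⟨x, y⟩ hij ⟨hx, hy⟩
      exact Prod.ext (pr_of_ne M hx hij) (pr_of_ne N hy hij)
    · rintro ⟨x, y⟩
      have : ((x, y) : M.carrier × N.carrier) = LinearMap.inl k _ _ x + LinearMap.inr k _ _ y := by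
        simp
      rw [this]
      refine Submodule.add_mem _ ?_ ?_
      · refine mem_of_pr M (Submodule.comap (LinearMap.inl k M.carrier N.carrier)
          (⨆ i, (M.grading i).prod (N.grading i))).toAddSubmonoid fun i => ?_
        refine Submodule.mem_iSup_of_mem i ⟨pr_mem M i x, Submodule.zero_mem _⟩
      · refine mem_of_pr N (Submodule.comap (LinearMap.inr k M.carrier N.carrier)
          (⨆ i, (M.grading i).prod (N.grading i))).toAddSubmonoid fun i => ?_
        refine Submodule.mem_iSup_of_mem i ⟨Submodule.zero_mem _, pr_mem N i y⟩
  smul_mem := fun ha hx => ⟨M.smul_mem ha hx.1, N.smul_mem ha hx.2⟩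
  fg := by
    have := M.fg
    have := N.fg
    infer_instance

/-- The regular graded module. -/
abbrev reg (A : GAlg k) : GMod A where
  carrier := A.carrier
  grading := A.grading
  internal := A.internal
  smul_mem := fun ha hx => A.mul_mem ha hx
  fg := inferInstance

lemma mkQ_mem (M : GMod A) (W : Submodule A.carrier M.carrier) (hW : Gr M W) :
    W.mkQ ∈ ghomSet M (quot M W hW) 0 := by
  intro i x hx
  rw [add_zero]
  exact ⟨x, hx, rfl⟩

/-! ### Homogeneous maps -/

lemma comp_mem {L M N : GMod A} {f : L.carrier →ₗ[A.carrier] M.carrier}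
    {g : M.carrier →ₗ[A.carrier] N.carrier} {a b : ℤ} (hf : f ∈ ghomSet L M a)
    (hg : g ∈ ghomSet M N b) : g ∘ₗ f ∈ ghomSet L N (a + b) := by
  intro i x hx
  rw [← add_assoc]
  exact hg _ _ (hf _ _ hx)

lemma hom_ext {M N : GMod A} {f g : M.carrier →ₗ[A.carrier] N.carrier}
    (h : ∀ i x, x ∈ M.grading i → f x = g x) : f = g := by
  ext x
  induction x using hom_ind with
  | h0 => simp
  | ha x y hx hy => simp [hx, hy]
  | hh i x hx => exact h i x hx

/-- Every homogeneous component of a linear map is linear. -/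
lemma exists_comp {M N : GMod A} (f : M.carrier →ₗ[A.carrier] N.carrier) (d : ℤ) :
    ∃ g ∈ ghomSet M N d, ∀ i x, x ∈ M.grading i → g x = pr N (i + d) (f x) := by
  let G : M.carrier →ₗ[k] N.carrier :=
    (DirectSum.toModule k ℤ N.carrier
      (fun i => pr N (i + d) ∘ₗ f.restrictScalars k ∘ₗ (M.grading i).subtype)) ∘ₗ
    (dec M).symm.toLinearMap
  have hG : ∀ i x, x ∈ M.grading i → G x = pr N (i + d) (f x) := by
    intro i x hx
    simp only [G, LinearMap.comp_apply, LinearEquiv.coe_coe, symm_of_mem M hx,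
      DirectSum.toModule_lof]
    rfl
  refine ⟨{ G with map_smul' := ?_ }, ?_, hG⟩
  · intro a x
    show G (a • x) = a • G x
    revert x
    refine hom_ind (reg A) (p := fun a => ∀ x, G (a • x) = a • G x) (by simp) ?_ ?_ a
    · intro i a ha x
      induction x using hom_ind with
      | h0 => simp
      | ha x y hx hy => simp [hx, hy]
      | hh j x hx =>
        rw [hG _ _ (M.smul_mem ha hx), hG _ _ hx, map_smul, add_assoc, pr_smul N ha]
    · intro a b ha hb x
      simp [add_smul, ha, hb]
  · intro i x hx
    show G x ∈ _
    rw [hG i x hx]; exact pr_mem _ _ _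

/-- Homogeneous maps factor through homogeneous surjections killing fewer elements. -/
lemma fac {L M N : GMod A} {p : L.carrier →ₗ[A.carrier] M.carrier}
    {h : L.carrier →ₗ[A.carrier] N.carrier} {a b : ℤ} (hp : p ∈ ghomSet L M a)
    (hps : Function.Surjective p) (hh : h ∈ ghomSet L N b)
    (hk : ∀ x, p x = 0 → h x = 0) : ∃ g ∈ ghomSet M N (b - a), ∀ x, g (p x) = h x := by
  let e := p.quotKerEquivOfSurjective hps
  have hg : ∀ x, ((LinearMap.ker p).liftQ h hk ∘ₗ e.symm.toLinearMap) (p x) = h x := by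
    intro x
    have : e.symm (p x) = (LinearMap.ker p).mkQ x := by
      rw [LinearEquiv.symm_apply_eq]; rfl
    rw [LinearMap.comp_apply, LinearEquiv.coe_coe, this]
    exact Submodule.liftQ_apply _ _ _
  refine ⟨(LinearMap.ker p).liftQ h hk ∘ₗ e.symm.toLinearMap, ?_, hg⟩
  intro i y hy
  obtain ⟨x, rfl⟩ := hps y
  have : p (pr L (i - a) x) = p x := by
    rw [pr_map hp]; simp [pr_of_mem M hy]
  rw [← this, hg]
  have := hh _ _ (pr_mem L (i - a) x)
  rwa [show i - a + b = i + (b - a) by ring] at this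

/-- Lifting homogeneous maps out of a projective along any homogeneous map whose range is
large enough. -/
lemma lift_proj [IsNoetherianRing A.carrier] {P M N : GMod A} (hP : GProjective P)
    {g : M.carrier →ₗ[A.carrier] N.carrier} {a d : ℤ} (hg : g ∈ ghomSet M N a)
    {h : P.carrier →ₗ[A.carrier] N.carrier} (hh : h ∈ ghomSet P N d)
    (hr : LinearMap.range h ≤ LinearMap.range g) :
    ∃ l ∈ ghomSet P M (d - a), ∀ x, g (l x) = h x := by
  let R := sub N (LinearMap.range g) (Gr.range hg)
  let M1 := GMod.shift (a - d) M
  let N1 := GMod.shift (-d) R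
  let g1 : M1 ⟶ N1 := ⟨(g.rangeRestrict : M.carrier →ₗ[A.carrier] LinearMap.range g), by
    intro i x hx
    have := hg _ x hx
    show g x ∈ N.grading (i - -d)
    rwa [show i - -d = i - (a - d) + a by ring]⟩
  let h1 : P ⟶ N1 := ⟨(h.codRestrict (LinearMap.range g) fun x => hr ⟨x, rfl⟩ :
      P.carrier →ₗ[A.carrier] LinearMap.range g), by
    intro i x hx
    have := hh _ x hx
    show h x ∈ N.grading (i - -d)
    rwa [sub_neg_eq_add]⟩
  obtain ⟨l, hl⟩ := hP M1 N1 g1 h1 g.surjective_rangeRestrict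
  refine ⟨l.1, ?_, ?_⟩
  · intro i x hx
    have : l.1 x ∈ M.grading (i - (a - d)) := l.2 i x hx
    rwa [show i - (a - d) = i + (d - a) by ring] at this
  · intro x
    have : (l ≫ g1).1 x = h1.1 x := by rw [hl]
    exact congrArg Subtype.val this

/-- A homogeneous map defined on a graded submodule. -/
def HomOn (M N : GMod A) (W : Submodule A.carrier M.carrier)
    (f : W →ₗ[A.carrier] N.carrier) (d : ℤ) : Prop :=
  ∀ i (x : W), x.1 ∈ M.grading i → f x ∈ N.grading (i + d)

/-- A map on `W` and a map on `P` which agree on the overlap glue to `W + u(P)`. -/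
lemma glue {P M N : GMod A} {W : Submodule A.carrier M.carrier} (hW : Gr M W)
    {u : P.carrier →ₗ[A.carrier] M.carrier} {a : ℤ} (hu : u ∈ ghomSet P M a)
    {f : W →ₗ[A.carrier] N.carrier} {b : ℤ} (hf : HomOn M N W f b)
    {t : P.carrier →ₗ[A.carrier] N.carrier} (ht : t ∈ ghomSet P N (a + b))
    (hag : ∀ x (h : u x ∈ W), f ⟨u x, h⟩ = t x) :
    ∃ g : ↥(W ⊔ LinearMap.range u) →ₗ[A.carrier] N.carrier,
      HomOn M N (W ⊔ LinearMap.range u) g b ∧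
      (∀ x (h : x ∈ W), g ⟨x, (le_sup_left : W ≤ W ⊔ LinearMap.range u) h⟩ = f ⟨x, h⟩) ∧
      ∀ x, g ⟨u x, (le_sup_right : _ ≤ W ⊔ LinearMap.range u) ⟨x, rfl⟩⟩ = t x := by
  let c : (W × P.carrier) →ₗ[A.carrier] ↥(W ⊔ LinearMap.range u) :=
    (W.subtype.coprod u).codRestrict _ (by
      rintro ⟨w, p⟩
      exact Submodule.add_mem_sup w.2 ⟨p, rfl⟩)
  have hc : Function.Surjective c := by
    rintro ⟨y, hy⟩
    obtain ⟨w, hw, _, ⟨p, rfl⟩, rfl⟩ := Submodule.mem_sup.1 hy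
    exact ⟨(⟨w, hw⟩, p), rfl⟩
  let h : (W × P.carrier) →ₗ[A.carrier] N.carrier := f.coprod t
  have hk : LinearMap.ker c ≤ LinearMap.ker h := by
    rintro ⟨w, p⟩ hwp
    have h1 : w.1 + u p = 0 := congrArg Subtype.val (LinearMap.mem_ker.1 hwp)
    have h2 : u p = (-w).1 := by rw [Submodule.coe_neg]; exact eq_neg_of_add_eq_zero_right h1
    have h3 : u p ∈ W := h2 ▸ (-w).2
    show f w + t p = 0
    rw [← hag p h3, ← map_add]
    convert map_zero f
    exact Subtype.ext h1
  let e := c.quotKerEquivOfSurjective hc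
  let g := (LinearMap.ker c).liftQ h hk ∘ₗ e.symm.toLinearMap
  have hg : ∀ w p, g (c (w, p)) = f w + t p := by
    intro w p
    have : e.symm (c (w, p)) = (LinearMap.ker c).mkQ (w, p) := by
      rw [LinearEquiv.symm_apply_eq]; rfl
    simp [g, this, h]
  refine ⟨g, ?_, ?_, ?_⟩
  · rintro i ⟨y, hy'⟩ hy
    obtain ⟨w, hw, _, ⟨p, rfl⟩, rfl⟩ := Submodule.mem_sup.1 hy'
    have h1 : w + u p = pr M i w + u (pr P (i - a) p) := by
      rw [pr_map hu, sub_add_cancel, ← map_add, pr_of_mem M hy]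
    have h2 : (⟨w + u p, hy'⟩ : ↥(W ⊔ LinearMap.range u)) =
        c (⟨pr M i w, hW i w hw⟩, pr P (i - a) p) := Subtype.ext h1
    rw [h2, hg]
    refine add_mem (hf i _ (pr_mem M i w)) ?_
    have := ht _ _ (pr_mem P (i - a) p)
    rwa [show i - a + (a + b) = i + b by ring] at this
  · intro x hx
    have h2 : (⟨x, (le_sup_left : W ≤ W ⊔ LinearMap.range u) hx⟩ :
        ↥(W ⊔ LinearMap.range u)) = c (⟨x, hx⟩, 0) :=
      Subtype.ext (by show x = x + u 0; simp)
    rw [h2, hg, map_zero, add_zero]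
  · intro x
    have h2 : (⟨u x, (le_sup_right : _ ≤ W ⊔ LinearMap.range u) ⟨x, rfl⟩⟩ :
        ↥(W ⊔ LinearMap.range u)) = c (0, x) :=
      Subtype.ext (by show u x = 0 + u x; simp)
    rw [h2, hg, map_zero, zero_add]

end Tilt

namespace Tilt

/-! ### Finiteness of graded modules over Laurentian algebras -/

lemma finrep (M : GMod A) : ∃ (s : Finset M.carrier) (deg : M.carrier → ℤ),
    (∀ x ∈ s, x ∈ M.grading (deg x)) ∧ ∀ n x, x ∈ M.grading n →
      ∃ c : M.carrier → A.carrier, (∀ y, c y ∈ A.grading (n - deg y)) ∧ x = ∑ y ∈ s, c y • y := by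
  classical
  have htop : Submodule.span A.carrier {x | ∃ i, x ∈ M.grading i} = ⊤ := by
    refine eq_top_iff.2 fun x _ => ?_
    exact mem_of_pr M (Submodule.span A.carrier _).toAddSubmonoid fun i =>
      Submodule.subset_span ⟨i, pr_mem M i x⟩
  have hfg : (Submodule.span A.carrier {x | ∃ i, x ∈ M.grading i}).FG := by
    rw [htop]; exact M.fg.fg_top
  obtain ⟨s, hs, hs'⟩ := Submodule.fg_span_iff_fg_span_finset_subset _ |>.1 hfg
  have hs2 : ∀ x : M.carrier, ∃ i, x ∈ s → x ∈ M.grading i := by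
    intro x
    by_cases hx : x ∈ s
    · obtain ⟨i, hi⟩ := hs hx; exact ⟨i, fun _ => hi⟩
    · exact ⟨0, fun h => absurd h hx⟩
  choose deg hdeg using hs2
  refine ⟨s, deg, fun x hx => hdeg x hx, fun n x hx => ?_⟩
  have hx' : x ∈ Submodule.span A.carrier (s : Set M.carrier) := by
    rw [← hs', htop]; trivial
  obtain ⟨c, -, hc⟩ := Submodule.mem_span_finset.1 hx'
  refine ⟨fun y => pr (reg A) (n - deg y) (c y), fun y => pr_mem (reg A) _ _, ?_⟩
  rw [← pr_of_mem M hx, ← hc, map_sum]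
  refine Finset.sum_congr rfl fun y hy => ?_
  have h1 : LinearMap.toSpanSingleton A.carrier M.carrier y ∈ ghomSet (reg A) M (deg y) :=
    fun i a ha => M.smul_mem ha (hdeg y hy)
  have h2 := pr_map h1 (n - deg y) (c y)
  rw [sub_add_cancel] at h2
  exact h2.symm

lemma bdd_below (hl : A.Laurentian) (M : GMod A) :
    ∃ N : ℤ, ∀ n < N, ∀ x ∈ M.grading n, x = 0 := by
  obtain ⟨s, deg, -, h2⟩ := finrep M
  obtain ⟨N, hN⟩ := hl.1
  obtain ⟨b, hb⟩ := (s.image deg).bddBelow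
  refine ⟨N + b, fun n hn x hx => ?_⟩
  obtain ⟨c, hc, rfl⟩ := h2 n x hx
  refine Finset.sum_eq_zero fun y hy => ?_
  have h3 : b ≤ deg y := hb (Finset.mem_coe.2 (Finset.mem_image_of_mem _ hy))
  have := hc y
  rw [hN _ (by omega), Submodule.mem_bot] at this
  rw [this, zero_smul]

lemma fin_dim (hl : A.Laurentian) (M : GMod A) (n : ℤ) : FiniteDimensional k (M.grading n) := by
  obtain ⟨s, deg, -, h2⟩ := finrep M
  have := hl.2
  let T : (∀ y : s, A.grading (n - deg y)) →ₗ[k] M.carrier :=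
    ∑ y : s, ((LinearMap.toSpanSingleton A.carrier M.carrier y.1).restrictScalars k ∘ₗ
      (A.grading (n - deg y)).subtype) ∘ₗ LinearMap.proj y
  have : M.grading n ≤ LinearMap.range T := by
    intro x hx
    obtain ⟨c, hc, rfl⟩ := h2 n x hx
    refine ⟨fun y => ⟨c y, hc y⟩, ?_⟩
    rw [← Finset.sum_coe_sort]
    simp only [T, LinearMap.sum_apply]
    rfl
  exact Submodule.finiteDimensional_of_le this

/-- The part of `M` in degrees at most `D` is finite-dimensional. -/
lemma fin_dim_le (hl : A.Laurentian) (M : GMod A) (D : ℤ) :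
    ∃ U : Submodule k M.carrier, FiniteDimensional k U ∧ ∀ i ≤ D, M.grading i ≤ U := by
  obtain ⟨N, hN⟩ := bdd_below hl M
  have := fin_dim hl M
  refine ⟨(Finset.Icc N D).sup M.grading, Submodule.finiteDimensional_finset_sup _ _, ?_⟩
  intro i hi
  by_cases h : N ≤ i
  · exact Finset.le_sup (f := M.grading) (Finset.mem_Icc.2 ⟨h, hi⟩)
  · intro x hx
    rw [hN i (by omega) x hx]; exact Submodule.zero_mem _

lemma bdd_gen (M : GMod A) : ∃ G : ℤ, ∀ W : Submodule A.carrier M.carrier,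
    (∀ i ≤ G, ∀ x ∈ M.grading i, x ∈ W) → W = ⊤ := by
  obtain ⟨s, deg, h1, h2⟩ := finrep M
  obtain ⟨G, hG⟩ := (s.image deg).bddAbove
  refine ⟨G, fun W hW => eq_top_iff.2 fun x _ => ?_⟩
  refine mem_of_pr M W.toAddSubmonoid fun i => ?_
  obtain ⟨c, -, hc⟩ := h2 i _ (pr_mem M i x)
  rw [hc]
  refine sum_mem fun y hy => W.smul_mem _ (hW (deg y) ?_ y (h1 y hy))
  exact hG (Finset.mem_coe.2 (Finset.mem_image_of_mem _ hy))

/-- Homogeneous maps between two given modules have degrees bounded below. -/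
lemma hom_bdd (hl : A.Laurentian) (M N : GMod A) :
    ∃ C : ℤ, 0 ≤ C ∧ ∀ d < -C, ∀ f ∈ ghomSet M N d, f = 0 := by
  obtain ⟨G, hG⟩ := bdd_gen M
  obtain ⟨b, hb⟩ := bdd_below hl N
  refine ⟨|G| + |b|, by positivity, fun d hd f hf => ?_⟩
  rw [← LinearMap.ker_eq_top]
  refine hG _ fun i hi x hx => ?_
  have := abs_nonneg G
  have := le_abs_self G
  have := neg_abs_le b
  exact hb _ (by omega) _ (hf i x hx)

lemma exists_max {R M : Type} [Ring R] [AddCommGroup M] [Module R M] [IsNoetherian R M]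
    (p : Submodule R M → Prop) {W : Submodule R M} (hW : p W) :
    ∃ V, p V ∧ ∀ V', p V' → V ≤ V' → V' = V := by
  obtain ⟨V, hV, h⟩ := (wellFounded_gt (α := Submodule R M)).has_min {V | p V} ⟨W, hW⟩
  refine ⟨V, hV, fun V' h1 h2 => ?_⟩
  by_contra hne
  exact h V' h1 (lt_of_le_of_ne h2 (Ne.symm hne))

lemma noethM [IsNoetherianRing A.carrier] (M : GMod A) : IsNoetherian A.carrier M.carrier := by
  have := M.fg
  infer_instance

/-! ### Projective and standard modules -/

section
variable (S : AHW A Idx)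

lemma hom_ne_zero_top {M : GMod A} (hM : Nontrivial M.carrier) :
    ∃ (σ : Idx) (d : ℤ), ∃ f ∈ ghomSet (S.P σ) M d, f ≠ 0 := by
  have := S.noeth
  have := noethM M
  obtain ⟨W, ⟨hW, hWt⟩, hmax⟩ := exists_max
    (fun W : Submodule A.carrier M.carrier => Gr M W ∧ W ≠ ⊤) (W := ⊥)
    ⟨Gr.bot M, bot_ne_top⟩
  have hs : IsGSimple (quot M W hW) := by
    refine ⟨Submodule.Quotient.nontrivial_iff.2 hWt, fun U hU => ?_⟩
    rw [gr_iff] at hU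
    have hc : Gr M (U.comap W.mkQ) := hU.comap (mkQ_mem M W hW)
    have hle : W ≤ U.comap W.mkQ := by
      intro x hx
      have : W.mkQ x = 0 := (Submodule.Quotient.mk_eq_zero W).2 hx
      rw [Submodule.mem_comap, this]; exact U.zero_mem
    have hmapc : (U.comap W.mkQ).map W.mkQ = U :=
      Submodule.map_comap_eq_of_surjective W.mkQ_surjective U
    by_cases h : U.comap W.mkQ = ⊤
    · right
      rw [← hmapc, h, Submodule.map_top, LinearMap.range_eq_top]; exact W.mkQ_surjective
    · left
      rw [← hmapc, hmax _ ⟨hc, h⟩ hle]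
      exact Submodule.mkQ_map_self W
  obtain ⟨σ, d, ⟨e⟩⟩ := S.simple_complete _ hs
  obtain ⟨p, hp, -⟩ := S.cover σ
  let h : (S.P σ).carrier →ₗ[A.carrier] (quot M W hW).carrier := e.e.symm.toLinearMap ∘ₗ p.1
  have hh : h ∈ ghomSet (S.P σ) (quot M W hW) d := by
    intro i x hx
    refine e.mem' (i + d) (p.1 x) ?_
    show p.1 x ∈ (S.L σ).grading (i + d - d)
    rw [add_sub_cancel_right]; exact p.2 i x hx
  have hhs : Function.Surjective h := e.e.symm.surjective.comp hp
  obtain ⟨l, hl, hl'⟩ := lift_proj (S.proj σ) (mkQ_mem M W hW) hh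
    (by rw [LinearMap.range_eq_top.2 W.mkQ_surjective]; exact le_top)
  refine ⟨σ, _, l, hl, ?_⟩
  rintro rfl
  have hnt := hs.1
  obtain ⟨y, hy⟩ := exists_ne (0 : (quot M W hW).carrier)
  obtain ⟨x, rfl⟩ := hhs y
  exact hy (by rw [← hl']; simp)

lemma hom_ne_zero {M : GMod A} {W : Submodule A.carrier M.carrier} (hW : Gr M W) (hne : W ≠ ⊥) :
    ∃ (σ : Idx) (d : ℤ), ∃ f ∈ ghomSet (S.P σ) M d, f ≠ 0 ∧ LinearMap.range f ≤ W := by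
  have := S.noeth
  obtain ⟨σ, d, f, hf, hf0⟩ := hom_ne_zero_top S (M := sub M W hW)
    (Submodule.nontrivial_iff_ne_bot.2 hne)
  refine ⟨σ, d, W.subtype ∘ₗ f, fun i x hx => hf i x hx, ?_, ?_⟩
  · intro h
    refine hf0 (LinearMap.ext fun x => Subtype.ext ?_)
    exact LinearMap.congr_fun h x
  · rintro _ ⟨x, rfl⟩; exact (f x).2

/-- The projection `P(π) ↠ Δ(π)`. -/
noncomputable def dm (π : Idx) : (S.P π).carrier →ₗ[A.carrier] (S.Δ π).carrier :=
  (S.std_def π).choose.1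

/-- The kernel of `P(π) ↠ Δ(π)`. -/
noncomputable abbrev Kr (π : Idx) : Submodule A.carrier (S.P π).carrier := LinearMap.ker (dm S π)

lemma dm_mem (π : Idx) : dm S π ∈ ghomSet (S.P π) (S.Δ π) 0 := by
  intro i x hx
  rw [add_zero]; exact (S.std_def π).choose.2 i x hx

lemma dm_surj (π : Idx) : Function.Surjective (dm S π) := (S.std_def π).choose_spec.1

lemma Kr_gr (π : Idx) : Gr (S.P π) (Kr S π) := Gr.ker (dm_mem S π)

lemma le_Kr {π σ : Idx} (h : ¬ σ ≤ π) {d : ℤ} {f : (S.P σ).carrier →ₗ[A.carrier] (S.P π).carrier}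
    (hf : f ∈ ghomSet (S.P σ) (S.P π) d) : LinearMap.range f ≤ Kr S π := by
  have h2 := (S.std_def π).choose_spec.2
  show _ ≤ LinearMap.ker (S.std_def π).choose.1
  rw [h2]
  exact le_iSup_of_le ⟨σ, f⟩ (le_iSup_of_le h (le_iSup_of_le ⟨d, hf⟩ le_rfl))

lemma hom_P_Δ {π σ : Idx} (h : ¬ σ ≤ π) {d : ℤ}
    {f : (S.P σ).carrier →ₗ[A.carrier] (S.Δ π).carrier}
    (hf : f ∈ ghomSet (S.P σ) (S.Δ π) d) : f = 0 := by
  have := S.noeth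
  obtain ⟨l, hl, hl'⟩ := lift_proj (S.proj σ) (dm_mem S π) hf
    (by rw [LinearMap.range_eq_top.2 (dm_surj S π)]; exact le_top)
  ext x
  rw [← hl']
  exact le_Kr S h hl ⟨x, rfl⟩

lemma fac_dm {π : Idx} {N : GMod A} {d : ℤ} {h : (S.P π).carrier →ₗ[A.carrier] N.carrier}
    (hh : h ∈ ghomSet (S.P π) N d) (hk : ∀ x ∈ Kr S π, h x = 0) :
    ∃ g ∈ ghomSet (S.Δ π) N d, ∀ x, g (dm S π x) = h x := by
  obtain ⟨g, hg, hg'⟩ := fac (dm_mem S π) (dm_surj S π) hh hk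
  exact ⟨g, by rwa [sub_zero] at hg, hg'⟩

/-- A homogeneous map `P(π) → Δ(π)` kills the kernel of `P(π) ↠ Δ(π)`. -/
lemma kills_Kr {π : Idx} {d : ℤ} {h : (S.P π).carrier →ₗ[A.carrier] (S.Δ π).carrier}
    (hh : h ∈ ghomSet (S.P π) (S.Δ π) d) : ∀ x ∈ Kr S π, h x = 0 := by
  intro x hx
  have h2 := (S.std_def π).choose_spec.2
  have hx' : x ∈ LinearMap.ker (S.std_def π).choose.1 := hx
  rw [h2] at hx'
  suffices H : (⨆ (p : Σ σ : Idx, (S.P σ).carrier →ₗ[A.carrier] (S.P π).carrier)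
        (_ : ¬ p.1 ≤ π) (_ : ∃ d, p.2 ∈ ghomSet (S.P p.1) (S.P π) d),
          LinearMap.range p.2) ≤ LinearMap.ker h from H hx'
  refine iSup_le fun p => iSup_le fun hp => iSup_le ?_
  rintro ⟨e, he⟩ _ ⟨y, rfl⟩
  exact LinearMap.congr_fun (hom_P_Δ S hp (comp_mem he hh)) y

/-- Homogeneous endomorphisms of `Δ(π)` of nonpositive degree are scalars, and vanish unless the
degree is zero, because `B_π` is generated in positive degrees. -/
lemma end_comp {π : Idx} {n : ℤ} (hn : n ≤ 0)
    {β : (S.Δ π).carrier →ₗ[A.carrier] (S.Δ π).carrier} (hβ : β ∈ ghomSet (S.Δ π) (S.Δ π) n) :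
    ∃ c : k, (n ≠ 0 → c = 0) ∧ ∀ x, β x = c • x := by
  obtain ⟨nv, dg, hdg, e, he, heX⟩ := S.end_poly π
  obtain ⟨p, rfl⟩ := he.2 β
  have hmon : ∀ m : Fin nv →₀ ℕ, e (MvPolynomial.monomial m 1) ∈
      ghomSet (S.Δ π) (S.Δ π) (∑ i, (m i : ℤ) * dg i) := by
    intro m
    induction m using Finsupp.induction_linear with
    | zero =>
      intro i x hx
      have : e (MvPolynomial.monomial 0 1) = 1 := map_one e
      rw [this]; simpa using hx
    | add m m' h h' =>
      intro i x hx
      have h1 : e (MvPolynomial.monomial (m + m') 1) =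
          e (MvPolynomial.monomial m 1) * e (MvPolynomial.monomial m' 1) := by
        rw [← map_mul, MvPolynomial.monomial_mul, one_mul]
      rw [h1, Module.End.mul_apply]
      have := h _ _ (h' _ _ hx)
      convert this using 2
      simp only [Finsupp.add_apply, Nat.cast_add, add_mul, Finset.sum_add_distrib]
      ring
    | single i a =>
      have h1 : (MvPolynomial.monomial (Finsupp.single i a) (1 : k)) = MvPolynomial.X i ^ a := by
        rw [MvPolynomial.X_pow_eq_monomial]
      have h2 : ∑ j, ((Finsupp.single i a j : ℕ) : ℤ) * dg j = a * dg i := by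
        rw [Finset.sum_eq_single i]
        · simp
        · intro b _ hb; simp [Finsupp.single_eq_of_ne hb]
        · simp
      rw [h2, h1, map_pow]
      clear h1 h2
      induction a with
      | zero => intro i x hx; simpa using hx
      | succ a ih =>
        intro j x hx
        rw [pow_succ, Module.End.mul_apply]
        have := ih _ _ (heX i _ _ hx)
        convert this using 2
        push_cast; ring
  have hpos : ∀ m : Fin nv →₀ ℕ, m ≠ 0 → 0 < ∑ i, (m i : ℤ) * dg i := by
    intro m hm
    obtain ⟨i, hi⟩ := Finsupp.ne_iff.1 hm
    refine Finset.sum_pos' (fun j _ => mul_nonneg (by positivity) (hdg j).le)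
      ⟨i, Finset.mem_univ _, mul_pos ?_ (hdg i)⟩
    have : m i ≠ 0 := hi
    positivity
  classical
  refine ⟨if n = 0 then p.coeff 0 else 0, fun h => by simp [h], ?_⟩
  have hp : ∀ x, e p x = ∑ m ∈ p.support, p.coeff m • e (MvPolynomial.monomial m 1) x := by
    intro x
    conv_lhs => rw [p.as_sum]
    rw [map_sum, LinearMap.sum_apply]
    refine Finset.sum_congr rfl fun m _ => ?_
    have : MvPolynomial.monomial m (p.coeff m) = p.coeff m • MvPolynomial.monomial m (1 : k) := by
      rw [MvPolynomial.smul_monomial, smul_eq_mul, mul_one]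
    rw [this, map_smul]; rfl
  intro x
  induction x using hom_ind with
  | h0 => simp
  | ha x y hx hy => rw [map_add, hx, hy, smul_add]
  | hh i x hx =>
    rw [← pr_of_mem _ (hβ i x hx), hp x, map_sum]
    have hz : ∀ m : Fin nv →₀ ℕ, (m ≠ 0 ∨ n ≠ 0) →
        pr (S.Δ π) (i + n) (p.coeff m • e (MvPolynomial.monomial m 1) x) = 0 := by
      intro m hm
      rw [map_smul, pr_of_ne _ (hmon m i x hx), smul_zero]
      by_cases h0 : m = 0
      · subst h0
        rcases hm with h | h
        · exact absurd rfl h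
        · simp; omega
      · have := hpos m h0
        omega
    by_cases hn0 : n = 0
    · subst hn0
      rw [Finset.sum_eq_single 0]
      · have : e (MvPolynomial.monomial 0 1) = 1 := map_one e
        rw [this, if_pos rfl, map_smul, add_zero]
        congr 1
        exact pr_of_mem _ hx
      · intro m _ hm; exact hz m (Or.inl hm)
      · intro h
        rw [MvPolynomial.notMem_support_iff.1 h, zero_smul, map_zero]
    · rw [if_neg hn0, zero_smul]
      exact Finset.sum_eq_zero fun m _ => hz m (Or.inr hn0)

end
end Tilt

namespace Tilt

/-! ### Filtrations and extensions of maps from `ker (P(σ) → Δ(σ))` -/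

/-- `W / W'` is a copy of `N`, via a map of degree `d`. -/
def SQ (M : GMod A) (W W' : Submodule A.carrier M.carrier) (N : GMod A) (d : ℤ) : Prop :=
  ∃ g : W →ₗ[A.carrier] N.carrier, Function.Surjective g ∧ (∀ x : W, g x = 0 ↔ x.1 ∈ W') ∧
    HomOn M N W g d

lemma sq_iff0 [IsNoetherianRing A.carrier] {M N : GMod A} {W W' : Submodule A.carrier M.carrier}
    (hW : Gr M W) : SQIso M W W' N ↔ SQ M W W' N 0 := by
  constructor
  · rintro ⟨e, he⟩
    refine ⟨e.toLinearMap ∘ₗ (W'.comap W.subtype).mkQ,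
      e.surjective.comp (Submodule.mkQ_surjective _), fun x => ?_, fun i x hx => ?_⟩
    · rw [LinearMap.comp_apply, LinearEquiv.coe_coe, LinearEquiv.map_eq_zero_iff]
      exact Submodule.Quotient.mk_eq_zero _
    · rw [add_zero, ← he i]
      exact ⟨_, ⟨x, hx, rfl⟩, rfl⟩
  · rintro ⟨g, hs, hk, hg⟩
    have hk' : W'.comap W.subtype = LinearMap.ker g := by
      ext x; exact (hk x).symm
    let e := (Submodule.quotEquivOfEq _ _ hk').trans (g.quotKerEquivOfSurjective hs)
    have he : ∀ x, e ((W'.comap W.subtype).mkQ x) = g x := fun x => rfl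
    refine ⟨e, fun i => le_antisymm ?_ ?_⟩
    · rintro _ ⟨_, ⟨x, hx, rfl⟩, rfl⟩
      have := hg i x hx
      rw [add_zero] at this
      exact this
    · intro y hy
      obtain ⟨x, rfl⟩ := hs y
      have hg' : g ∈ ghomSet (sub M W hW) N 0 := hg
      have h2 := pr_map hg' i x
      rw [add_zero, pr_of_mem N hy] at h2
      rw [← h2]
      exact ⟨_, ⟨pr (sub M W hW) i x, pr_mem (sub M W hW) i x, rfl⟩, rfl⟩

lemma sq_iff [IsNoetherianRing A.carrier] {M N : GMod A} {W W' : Submodule A.carrier M.carrier}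
    (hW : Gr M W) (d : ℤ) : SQIso M W W' (GMod.shift d N) ↔ SQ M W W' N (-d) := by
  rw [sq_iff0 hW]
  have : ∀ i : ℤ, i + 0 - d = i + -d := fun i => by ring
  constructor
  · rintro ⟨g, hs, hk, hg⟩
    refine ⟨g, hs, hk, fun i x hx => ?_⟩
    rw [← this]; exact hg i x hx
  · rintro ⟨g, hs, hk, hg⟩
    refine ⟨g, hs, hk, fun i x hx => ?_⟩
    show g x ∈ N.grading (i + 0 - d)
    rw [this]; exact hg i x hx

lemma le_of_sq_subsingleton {M : GMod A} {W W' : Submodule A.carrier M.carrier}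
    (h : Subsingleton (sqMod M W W')) : W ≤ W' := by
  rw [Submodule.Quotient.subsingleton_iff] at h
  intro x hx
  have : (⟨x, hx⟩ : W) ∈ W'.comap W.subtype := by rw [h]; trivial
  exact this

lemma sq_subsingleton {M : GMod A} {W W' : Submodule A.carrier M.carrier}
    (h : W ≤ W') : Subsingleton (sqMod M W W') := by
  rw [Submodule.Quotient.subsingleton_iff, eq_top_iff]
  intro x _
  exact h x.2

section
variable (S : AHW A Idx)

/-- The submodules of `P(σ)` built by successively adjoining homogeneous images of `P(τ)`,
`τ > σ`, so that each new layer is a copy of `Δ(τ)`. -/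
inductive DChain (σ : Idx) : Submodule A.carrier (S.P σ).carrier → Prop
  | bot : DChain σ ⊥
  | step {W : Submodule A.carrier (S.P σ).carrier} (τ : Idx) (d : ℤ)
      (u : (S.P τ).carrier →ₗ[A.carrier] (S.P σ).carrier) (hτ : σ < τ) (hW : DChain σ W)
      (hu : u ∈ ghomSet (S.P τ) (S.P σ) d) (h : ∀ x, u x ∈ W ↔ x ∈ Kr S τ) :
      DChain σ (W ⊔ LinearMap.range u)

variable {S}

lemma DChain.gr {σ : Idx} {W : Submodule A.carrier (S.P σ).carrier} (h : DChain S σ W) :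
    Gr (S.P σ) W := by
  induction h with
  | bot => exact Gr.bot _
  | step τ d u _ _ hu _ ih => exact ih.sup (Gr.range hu)

variable (S)

lemma exists_layer [IsNoetherianRing A.carrier] {M : GMod A} {W W' : Submodule A.carrier M.carrier}
    (hW : Gr M W) (hle : W' ≤ W) {τ : Idx} {d : ℤ} (h : SQ M W W' (S.Δ τ) d) :
    ∃ u ∈ ghomSet (S.P τ) M (-d), W = W' ⊔ LinearMap.range u ∧ ∀ x, u x ∈ W' ↔ x ∈ Kr S τ := by
  obtain ⟨g, hs, hk, hg⟩ := h
  have hg' : g ∈ ghomSet (sub M W hW) (S.Δ τ) d := hg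
  obtain ⟨l, hl, hl'⟩ := lift_proj (S.proj τ) hg' (dm_mem S τ)
    (by rw [LinearMap.range_eq_top.2 hs]; exact le_top)
  rw [zero_sub] at hl
  refine ⟨W.subtype ∘ₗ l, fun i x hx => hl i x hx, le_antisymm ?_ ?_, fun x => ?_⟩
  · intro x hx
    obtain ⟨p, hp⟩ := dm_surj S τ (g ⟨x, hx⟩)
    have h1 : (⟨x, hx⟩ - l p : W).1 ∈ W' := by
      rw [← hk, map_sub, hl', hp, sub_self]
    have h2 : x = (⟨x, hx⟩ - l p : W).1 + (W.subtype ∘ₗ l) p := by simp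
    rw [h2]
    exact Submodule.add_mem_sup h1 ⟨p, rfl⟩
  · refine sup_le hle ?_
    rintro _ ⟨p, rfl⟩; exact (l p).2
  · show (l x).1 ∈ W' ↔ _
    rw [← hk, hl']; rfl

lemma dchain_Kr (σ : Idx) : DChain S σ (Kr S σ) := by
  have := S.noeth
  obtain ⟨Φ, ⟨N, hN⟩, h1, h2⟩ := S.ker_filt σ
  have hgr : ∀ n, Gr (S.P σ) (Φ.F n) := fun n => gr_iff.1 (Φ.graded n)
  have hK : Φ.F 1 = Kr S σ := by
    rw [sq_iff0 (hgr 0)] at h1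
    obtain ⟨g, hs, hk, hg⟩ := h1
    have hF : ∀ x, x ∈ Φ.F 0 := fun x => by rw [Φ.first]; trivial
    let g' : (S.P σ).carrier →ₗ[A.carrier] (S.Δ σ).carrier :=
      g ∘ₗ LinearMap.id.codRestrict (Φ.F 0) hF
    have hg' : g' ∈ ghomSet (S.P σ) (S.Δ σ) 0 := fun i x hx => hg i ⟨x, hF x⟩ hx
    obtain ⟨b, hb, hb'⟩ := fac_dm S hg' (kills_Kr S hg')
    have hbs : Function.Surjective b := by
      intro y
      obtain ⟨x, rfl⟩ := hs y
      exact ⟨dm S σ x.1, hb' _⟩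
    have := noethM (S.Δ σ)
    have hbi : Function.Injective b :=
      IsNoetherian.injective_of_surjective_endomorphism b hbs
    ext x
    rw [← hk ⟨x, hF x⟩]
    show g' x = 0 ↔ dm S σ x = 0
    rw [← hb', map_eq_zero_iff b hbi]
  rw [← hK]
  have key : ∀ m n, n + m = N + 1 → 1 ≤ n → DChain S σ (Φ.F n) := by
    intro m
    induction m with
    | zero =>
      intro n hn _
      have : Φ.F n = ⊥ := by
        rw [show n = N + 1 by omega, eq_bot_iff, ← hN]; exact Φ.anti N
      rw [this]; exact DChain.bot
    | succ m ih =>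
      intro n hn h
      have hc := ih (n + 1) (by omega) (by omega)
      rcases h2 n h with h3 | ⟨τ, hτ, d, h3⟩
      · rw [le_antisymm (le_of_sq_subsingleton h3) (Φ.anti n)]; exact hc
      · rw [sq_iff (hgr n)] at h3
        obtain ⟨u, hu, hu1, hu2⟩ := exists_layer S (hgr n) (Φ.anti n) h3
        rw [hu1]
        exact DChain.step τ _ u hτ hc hu hu2
  exact key N 1 (by omega) le_rfl

/-- A map from `ker (P(σ) → Δ(σ))` vanishes when there are no maps from the `P(τ)`, `τ > σ`, in
a bounded range of degrees. -/
lemma exists_Kr_bound (σ : Idx) : ∃ C : ℤ, 0 ≤ C ∧ ∀ (X : GMod A) (d : ℤ),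
    (∀ τ, σ < τ → ∀ e ≤ d + C, ∀ f ∈ ghomSet (S.P τ) X e, f = 0) →
    ∀ f : Kr S σ →ₗ[A.carrier] X.carrier, HomOn (S.P σ) X (Kr S σ) f d → f = 0 := by
  suffices H : ∀ W, DChain S σ W → ∃ C : ℤ, 0 ≤ C ∧ ∀ (X : GMod A) (d : ℤ),
      (∀ τ, σ < τ → ∀ e ≤ d + C, ∀ f ∈ ghomSet (S.P τ) X e, f = 0) →
      ∀ f : W →ₗ[A.carrier] X.carrier, HomOn (S.P σ) X W f d → f = 0 from H _ (dchain_Kr S σ)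
  intro W hW
  induction hW with
  | bot =>
    refine ⟨0, le_rfl, fun X d _ f _ => LinearMap.ext fun x => ?_⟩
    have : x = 0 := Subsingleton.elim _ _
    rw [this, map_zero, map_zero]
  | @step W τ a u hτ hW hu h ih =>
    obtain ⟨C, hC, ih⟩ := ih
    refine ⟨C + |a|, by positivity, fun X d hX f hf => ?_⟩
    have := neg_abs_le a
    have := le_abs_self a
    have h1 := ih X d (fun τ hτ e he => hX τ hτ e (by omega))
      (f ∘ₗ Submodule.inclusion le_sup_left) (fun i x hx => hf i _ hx)
    have h2 := hX τ hτ (a + d) (by omega)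
      (f ∘ₗ u.codRestrict (W ⊔ LinearMap.range u) fun x =>
        (le_sup_right : _ ≤ W ⊔ LinearMap.range u) ⟨x, rfl⟩)
      (fun i x hx => by rw [← add_assoc]; exact hf _ _ (hu i x hx))
    ext ⟨y, hy⟩
    obtain ⟨w, hw, _, ⟨p, rfl⟩, rfl⟩ := Submodule.mem_sup.1 hy
    have h3 : f ⟨w, (le_sup_left : W ≤ W ⊔ LinearMap.range u) hw⟩ = 0 :=
      LinearMap.congr_fun h1 ⟨w, hw⟩
    have h4 : f ⟨u p, (le_sup_right : _ ≤ W ⊔ LinearMap.range u) ⟨p, rfl⟩⟩ = 0 :=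
      LinearMap.congr_fun h2 p
    have h5 := congrArg₂ (· + ·) h3 h4
    simp only [add_zero, ← map_add] at h5
    exact h5

lemma hom_Δ_ne_zero {M : GMod A} {W : Submodule A.carrier M.carrier} (hW : Gr M W) (hne : W ≠ ⊥) :
    ∃ (σ : Idx) (d : ℤ), ∃ f ∈ ghomSet (S.Δ σ) M d, f ≠ 0 ∧ LinearMap.range f ≤ W := by
  let T : Set Idx := {σ | ∃ d : ℤ, ∃ f ∈ ghomSet (S.P σ) M d, f ≠ 0 ∧ LinearMap.range f ≤ W}
  have hT : T.Nonempty := hom_ne_zero S hW hne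
  obtain ⟨σ, hσ⟩ := T.toFinite.exists_maximal hT
  obtain ⟨⟨d, f, hf, hf0, hfW⟩, hmax⟩ := hσ
  have hk : ∀ x ∈ Kr S σ, f x = 0 := by
    suffices H : ∀ W, DChain S σ W → W ≤ LinearMap.ker f from H _ (dchain_Kr S σ)
    intro U hU
    induction hU with
    | bot => exact bot_le
    | step τ a u hτ _ hu _ ih =>
      refine sup_le ih ?_
      rintro _ ⟨x, rfl⟩
      by_contra h
      have hm : τ ∈ T := ⟨_, f ∘ₗ u, comp_mem hu hf, fun h' => h (LinearMap.congr_fun h' x), by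
        rintro _ ⟨y, rfl⟩; exact hfW ⟨_, rfl⟩⟩
      exact absurd (hmax hm hτ.le) (not_le_of_gt hτ)
  obtain ⟨g, hg, hg'⟩ := fac_dm S hf hk
  refine ⟨σ, d, g, hg, ?_, ?_⟩
  · rintro rfl
    exact hf0 (LinearMap.ext fun x => (hg' x).symm)
  · rintro _ ⟨y, rfl⟩
    obtain ⟨x, rfl⟩ := dm_surj S σ y
    rw [hg']; exact hfW ⟨x, rfl⟩

/-- The nonzero map `Δ(π) → ∇̄(π)`, unique up to scalars. -/
noncomputable def f0 (π : Idx) : (S.Δ π).carrier →ₗ[A.carrier] (S.pco π).carrier :=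
  (S.pco_hom π).choose

lemma f0_mem (π : Idx) : f0 S π ∈ ghomSet (S.Δ π) (S.pco π) 0 := (S.pco_hom π).choose_spec.1

lemma f0_ne (π : Idx) : f0 S π ≠ 0 := (S.pco_hom π).choose_spec.2.1

lemma hom_eq_f0 {π : Idx} {d : ℤ} {f : (S.Δ π).carrier →ₗ[A.carrier] (S.pco π).carrier}
    (hf : f ∈ ghomSet (S.Δ π) (S.pco π) d) : ∃ c : k, f = c • f0 S π :=
  (S.pco_hom π).choose_spec.2.2.1 d f hf

lemma hom_eq_zero {π σ : Idx} {d : ℤ} {f : (S.Δ σ).carrier →ₗ[A.carrier] (S.pco π).carrier}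
    (hf : f ∈ ghomSet (S.Δ σ) (S.pco π) d) (h : σ ≠ π) : f = 0 :=
  (S.pco_hom π).choose_spec.2.2.2 σ d f hf h

/-- The image of `Δ(π)` lies in every nonzero graded submodule of `∇̄(π)`. -/
lemma range_f0_le {π : Idx} {W : Submodule A.carrier (S.pco π).carrier} (hW : Gr (S.pco π) W)
    (hne : W ≠ ⊥) : LinearMap.range (f0 S π) ≤ W := by
  obtain ⟨σ, d, f, hf, hf0, hfW⟩ := hom_Δ_ne_zero S hW hne
  by_cases h : σ = π
  · subst h
    obtain ⟨c, rfl⟩ := hom_eq_f0 S hf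
    have hc : c ≠ 0 := by rintro rfl; simp at hf0
    rintro _ ⟨x, rfl⟩
    have : f0 S σ x = (c • f0 S σ) (c⁻¹ • x) := by
      rw [LinearMap.smul_apply, LinearMap.map_smul_of_tower, smul_smul, mul_inv_cancel₀ hc,
        one_smul]
    rw [this]
    exact hfW ⟨_, rfl⟩
  · exact absurd (hom_eq_zero S hf h) hf0

/-- `P(π)` has a unique maximal graded submodule. -/
lemma local_P {π : Idx} {V W : Submodule A.carrier (S.P π).carrier} (hV : Gr (S.P π) V)
    (h : V ⊔ W = ⊤) (hW : Gr (S.P π) W) : V = ⊤ ∨ W = ⊤ := by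
  obtain ⟨p, hp, hc⟩ := S.cover π
  have hp' : p.1 ∈ ghomSet (S.P π) (S.L π) 0 := fun i x hx => by
    rw [add_zero]; exact p.2 i x hx
  rcases (S.simple π).2 _ (gr_iff.2 (hV.map hp')) with h1 | h1
  · right
    refine hc W (gr_iff.2 hW) (eq_top_iff.2 ?_)
    rw [← h, sup_comm]
    exact sup_le_sup_left ((LinearMap.le_ker_iff_map.2 h1)) W
  · left
    refine hc V (gr_iff.2 hV) (eq_top_iff.2 fun x _ => ?_)
    have : p.1 x ∈ Submodule.map p.1 V := by rw [h1]; trivial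
    obtain ⟨v, hv, hvx⟩ := this
    have h2 : x = v + (x - v) := by abel
    rw [h2]
    refine Submodule.add_mem_sup hv ?_
    rw [LinearMap.mem_ker, map_sub, hvx, sub_self]

end

lemma mem_of_inj {M N : GMod A} {g : M.carrier →ₗ[A.carrier] N.carrier} {d : ℤ}
    (hg : g ∈ ghomSet M N d) (hi : Function.Injective g) {i : ℤ} {x : M.carrier}
    (hx : g x ∈ N.grading (i + d)) : x ∈ M.grading i := by
  have h1 : g (pr M i x) = g x := by rw [pr_map hg, pr_of_mem N hx]
  rw [← hi h1]; exact pr_mem M i x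

/-- The pushout of `P` along a homogeneous map `f : K → X` on a graded submodule `K ⊆ P`. -/
lemma pushout [IsNoetherianRing A.carrier] {X P : GMod A} {K : Submodule A.carrier P.carrier}
    (hK : Gr P K) {n : ℤ} {f : K →ₗ[A.carrier] X.carrier} (hf : HomOn P X K f n) :
    ∃ (E : GMod A), ∃ ι ∈ ghomSet X E 0, ∃ u ∈ ghomSet P E n, Function.Injective ι ∧
      (∀ x (h : x ∈ K), u x = ι (f ⟨x, h⟩)) ∧ LinearMap.range ι ⊔ LinearMap.range u = ⊤ ∧
      ∀ x, u x ∈ LinearMap.range ι ↔ x ∈ K := by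
  let c : K →ₗ[A.carrier] X.carrier × P.carrier := f.prod (-K.subtype)
  have hc : c ∈ ghomSet (sub P K hK) (prod X (GMod.shift n P)) n := by
    intro i x hx
    refine ⟨hf i x hx, ?_⟩
    show -x.1 ∈ P.grading (i + n - n)
    rw [add_sub_cancel_right]; exact neg_mem hx
  have hgr := Gr.range hc
  have hm := mkQ_mem _ _ hgr
  let ι : X.carrier →ₗ[A.carrier] ((X.carrier × P.carrier) ⧸ LinearMap.range c) :=
    (LinearMap.range c).mkQ ∘ₗ LinearMap.inl _ _ _
  let u : P.carrier →ₗ[A.carrier] ((X.carrier × P.carrier) ⧸ LinearMap.range c) :=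
    (LinearMap.range c).mkQ ∘ₗ LinearMap.inr _ _ _
  have hz : ∀ x p, ι x = u p ↔ ∃ h : p ∈ K, f ⟨p, h⟩ = x := by
    intro x p
    have h0 : ι x = u p ↔ ((x, -p) : X.carrier × P.carrier) ∈ LinearMap.range c := by
      rw [← sub_eq_zero, ← Submodule.Quotient.mk_eq_zero (LinearMap.range c)]
      have : ι x - u p = (LinearMap.range c).mkQ (x, -p) := by
        simp only [ι, u, LinearMap.comp_apply, ← map_sub]
        congr 1
        simp
      rw [this]; rfl
    rw [h0]
    constructor
    · rintro ⟨y, hy⟩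
      have h1 : f y = x := congrArg Prod.fst hy
      have h2 : -y.1 = -p := congrArg Prod.snd hy
      have h3 : y.1 = p := neg_injective h2
      subst h3
      exact ⟨y.2, h1⟩
    · rintro ⟨h, rfl⟩
      exact ⟨⟨p, h⟩, rfl⟩
  refine ⟨quot (prod X (GMod.shift n P)) _ hgr, ι, ?_, u, ?_, ?_, ?_, ?_, ?_⟩
  · intro i x hx
    rw [add_zero]
    exact ⟨(x, 0), ⟨hx, Submodule.zero_mem _⟩, rfl⟩
  · intro i x hx
    refine ⟨(0, x), ⟨Submodule.zero_mem _, ?_⟩, rfl⟩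
    show x ∈ P.grading (i + n - n)
    rwa [add_sub_cancel_right]
  · refine (injective_iff_map_eq_zero ι).2 fun x hx => ?_
    have h1 : ι x = u 0 := by rw [map_zero]; exact hx
    obtain ⟨h, h2⟩ := (hz x 0).1 h1
    rw [← h2]
    exact map_zero f
  · intro x h
    exact ((hz _ _).2 ⟨h, rfl⟩).symm
  · rw [eq_top_iff]
    intro y _
    obtain ⟨⟨x, p⟩, rfl⟩ := (LinearMap.range c).mkQ_surjective y
    have h1 : (LinearMap.range c).mkQ (x, p) = ι x + u p := by
      simp only [ι, u, LinearMap.comp_apply, ← map_add]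
      congr 1
      simp
    rw [h1]
    exact Submodule.add_mem_sup ⟨x, rfl⟩ ⟨p, rfl⟩
  · intro p
    constructor
    · rintro ⟨x, hx⟩
      exact ((hz x p).1 hx).1
    · intro h
      exact ⟨_, (hz _ _).2 ⟨h, rfl⟩⟩

/-- The pushout of `X` along a map on `ker p`, for a surjection `p : P → D`, is an extension of
(a shift of) `D` by `X`. -/
lemma pushout_ext [IsNoetherianRing A.carrier] {X P D : GMod A}
    {p : P.carrier →ₗ[A.carrier] D.carrier} (hp : p ∈ ghomSet P D 0) (hps : Function.Surjective p)
    {n : ℤ} {f : LinearMap.ker p →ₗ[A.carrier] X.carrier}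
    (hf : HomOn P X (LinearMap.ker p) f n) :
    ∃ (E : GMod A), ∃ ι ∈ ghomSet X E 0, ∃ u ∈ ghomSet P E n, ∃ g ∈ ghomSet E D (-n),
      Function.Injective ι ∧ (∀ x (h : x ∈ LinearMap.ker p), u x = ι (f ⟨x, h⟩)) ∧
      Function.Surjective g ∧ LinearMap.range ι = LinearMap.ker g ∧ ∀ x, g (u x) = p x := by
  obtain ⟨E, ι, hι, u, hu, h1, h2, h3, h4⟩ := pushout (Gr.ker hp) hf
  obtain ⟨g, hg, hgι, hgu⟩ := glue (N := D) (b := -n) (Gr.range hι) hu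
    (f := 0) (fun i x _ => by simp) (t := p) (by rwa [add_neg_cancel])
    (fun x hx => ((h4 x).1 hx).symm)
  let g' : E.carrier →ₗ[A.carrier] D.carrier :=
    g ∘ₗ LinearMap.id.codRestrict (LinearMap.range ι ⊔ LinearMap.range u)
      (fun x => by rw [h3]; trivial)
  have hgu' : ∀ x, g' (u x) = p x := hgu
  have hgι' : ∀ x, g' (ι x) = 0 := fun x => hgι (ι x) ⟨x, rfl⟩
  refine ⟨E, ι, hι, u, hu, g', fun i x hx => hg i _ hx, h1, h2, ?_, ?_, hgu'⟩
  · intro y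
    obtain ⟨x, rfl⟩ := hps y
    exact ⟨u x, hgu' x⟩
  · apply le_antisymm
    · rintro _ ⟨x, rfl⟩; exact hgι' x
    · intro y hy
      have hy' : y ∈ LinearMap.range ι ⊔ LinearMap.range u := by rw [h3]; trivial
      obtain ⟨w, hw, _, ⟨q, rfl⟩, rfl⟩ := Submodule.mem_sup.1 hy'
      refine Submodule.add_mem _ hw ((h4 q).2 ?_)
      obtain ⟨x, rfl⟩ := hw
      rw [LinearMap.mem_ker, map_add, hgι', hgu', zero_add] at hy
      exact hy

section
variable (S : AHW A Idx)

/-- Every homogeneous map `ker (P(σ) → Δ(σ)) → W` extends to a homogeneous map `P(σ) → W`; that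
is, `ext¹(Δ(σ), W) = 0` for all `σ`. -/
def GoodSub (X : GMod A) (W : Submodule A.carrier X.carrier) : Prop :=
  ∀ (σ : Idx) (d : ℤ) (f : Kr S σ →ₗ[A.carrier] X.carrier), HomOn (S.P σ) X (Kr S σ) f d →
    (∀ x, f x ∈ W) → ∃ g ∈ ghomSet (S.P σ) X d, (∀ x (h : x ∈ Kr S σ), g x = f ⟨x, h⟩) ∧
      ∀ x, g x ∈ W

lemma pco_good (π : Idx) : GoodSub S (S.pco π) ⊤ := by
  intro σ d f hf _
  have := S.noeth
  obtain ⟨E, ι, hι, u, hu, g, hg, h1, h2, h3, h4, h5⟩ :=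
    pushout_ext (dm_mem S σ) (dm_surj S σ) hf
  let ι' : S.pco π ⟶ E := ⟨ι, fun i x hx => by simpa using hι i x hx⟩
  let g' : E ⟶ GMod.shift d (S.Δ σ) := ⟨g, fun i x hx => by
    show g x ∈ (S.Δ σ).grading (i - d)
    rw [sub_eq_add_neg]; exact hg i x hx⟩
  obtain ⟨s, hs⟩ := S.pco_ext π σ d E ι' g' h1 h3 h4
  have hs' : ∀ y, g (s.1 y) = y := fun y => by
    have : (s ≫ g').1 y = y := by rw [hs]; rfl
    exact this
  let s1 : (S.Δ σ).carrier →ₗ[A.carrier] E.carrier := s.1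
  have hs1 : s1 ∈ ghomSet (S.Δ σ) E d := fun i x hx => by
    refine s.2 (i + d) x ?_
    show x ∈ (S.Δ σ).grading (i + d - d)
    rwa [add_sub_cancel_right]
  let v : (S.P σ).carrier →ₗ[A.carrier] E.carrier := u - s1 ∘ₗ dm S σ
  have hv : v ∈ ghomSet (S.P σ) E d := by
    intro i x hx
    refine sub_mem (hu i x hx) ?_
    have := comp_mem (dm_mem S σ) hs1 i x hx
    rwa [zero_add] at this
  obtain ⟨l, hl, hl'⟩ := lift_proj (S.proj σ) hι hv (by
    rw [h4]
    rintro _ ⟨x, rfl⟩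
    rw [LinearMap.mem_ker]
    show g (u x - s1 (dm S σ x)) = 0
    rw [map_sub, h5, sub_eq_zero]
    exact (hs' _).symm)
  rw [sub_zero] at hl
  refine ⟨l, hl, fun x h => h1 ?_, fun _ => trivial⟩
  rw [hl', ← h2 x h]
  have : dm S σ x = 0 := h
  show u x - s1 (dm S σ x) = u x
  rw [this, map_zero, sub_zero]

end
end Tilt

namespace Tilt

/-! ### Peeling off a proper costandard quotient -/

/-- Uniform bounds for the degrees of maps, together with a weight function `c` on the poset
growing faster than these bounds. -/
structure Bounds (S : AHW A Idx) where
  /-- a bound for the degrees of maps between indecomposable projectives -/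
  C1 : ℤ
  /-- a bound for the degrees of generators of the kernels of `P(σ) → Δ(σ)` -/
  C2 : ℤ
  /-- a bound for the degrees of generators of the indecomposable projectives -/
  G : ℤ
  /-- the weight function -/
  c : Idx → ℤ
  /-- a bound for the differences of weights -/
  D : ℤ
  nonneg1 : 0 ≤ C1
  nonneg2 : 0 ≤ C2
  hom_P : ∀ π τ n, n < -C1 → ∀ f ∈ ghomSet (S.P π) (S.P τ) n, f = 0
  hom_Kr : ∀ (σ : Idx) (X : GMod A) (d : ℤ),
    (∀ τ, σ < τ → ∀ e ≤ d + C2, ∀ f ∈ ghomSet (S.P τ) X e, f = 0) →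
    ∀ f : Kr S σ →ₗ[A.carrier] X.carrier, HomOn (S.P σ) X (Kr S σ) f d → f = 0
  gen : ∀ π, ∀ W : Submodule A.carrier (S.P π).carrier,
    (∀ i ≤ G, ∀ x ∈ (S.P π).grading i, x ∈ W) → W = ⊤
  lt : ∀ π τ, π < τ → c π + C1 + C2 < c τ
  diff : ∀ π τ, c π - c τ ≤ D

section
variable (S : AHW A Idx)

lemma exists_bounds : Nonempty (Bounds S) := by
  classical
  choose B hB hB' using fun p : Idx × Idx => hom_bdd S.laur (S.P p.1) (S.P p.2)
  choose K hK hK' using fun σ => exists_Kr_bound S σ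
  choose G hG using fun π => bdd_gen (S.P π)
  have hB1 : ∀ p, B p ≤ ∑ p, B p := fun p =>
    Finset.single_le_sum (f := B) (fun p _ => hB p) (Finset.mem_univ p)
  have hK1 : ∀ p, K p ≤ ∑ p, K p := fun p =>
    Finset.single_le_sum (f := K) (fun p _ => hK p) (Finset.mem_univ p)
  have hG1 : ∀ p, G p ≤ ∑ p, |G p| := fun p => (le_abs_self _).trans
    (Finset.single_le_sum (f := fun p => |G p|) (fun p _ => abs_nonneg _) (Finset.mem_univ p))
  set C1 := ∑ p, B p with hC1
  set C2 := ∑ p, K p with hC2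
  have h1 : 0 ≤ C1 := Finset.sum_nonneg fun p _ => hB p
  have h2 : 0 ≤ C2 := Finset.sum_nonneg fun p _ => hK p
  let h : Idx → ℤ := fun π => (Finset.univ.filter (· ≤ π)).card
  have hh : ∀ π τ, π < τ → h π + 1 ≤ h τ := by
    intro π τ hlt
    have : (Finset.univ.filter (· ≤ π)).card < (Finset.univ.filter (· ≤ τ)).card := by
      refine Finset.card_lt_card (Finset.ssubset_iff_of_subset ?_ |>.2 ⟨τ, ?_, ?_⟩)
      · intro σ hσ
        simp only [Finset.mem_filter, Finset.mem_univ, true_and] at hσ ⊢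
        exact hσ.trans hlt.le
      · simp
      · simpa using not_le_of_gt hlt
    show ((_ : ℕ) : ℤ) + 1 ≤ ((_ : ℕ) : ℤ)
    exact_mod_cast this
  refine ⟨⟨C1, C2, ∑ p, |G p|, fun π => (C1 + C2 + 1) * h π, ∑ p, (C1 + C2 + 1) * h p, h1, h2,
    ?_, ?_, ?_, ?_, ?_⟩⟩
  · intro π τ n hn
    exact hB' (π, τ) n (by have := hB1 (π, τ); omega)
  · intro σ X d H
    exact hK' σ X d fun τ hτ e he => H τ hτ e (by have := hK1 σ; omega)
  · intro π W H
    exact hG π W fun i hi => H i (hi.trans (hG1 π))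
  · intro π τ hlt
    have := hh π τ hlt
    nlinarith
  · intro π τ
    have h0 : ∀ p, 0 ≤ (C1 + C2 + 1) * h p := fun p =>
      mul_nonneg (by omega) (Int.natCast_nonneg _)
    have := Finset.single_le_sum (f := fun p => (C1 + C2 + 1) * h p) (fun p _ => h0 p)
      (Finset.mem_univ π)
    have := h0 τ
    omega

/-- Extension of maps into `∇̄(π)` from submodules containing all images of `P(τ)`, `τ ≥ π`. -/
lemma extend_to_pco {π : Idx} {Q : GMod A} {U : Submodule A.carrier Q.carrier} (hU : Gr Q U)
    (hUP : ∀ τ, π ≤ τ → ∀ d, ∀ ψ ∈ ghomSet (S.P τ) Q d, LinearMap.range ψ ≤ U) {e : ℤ}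
    {f : U →ₗ[A.carrier] (S.pco π).carrier} (hf : HomOn Q (S.pco π) U f e) :
    ∃ F ∈ ghomSet Q (S.pco π) e, ∀ x (h : x ∈ U), F x = f ⟨x, h⟩ := by
  have := S.noeth
  have := noethM Q
  obtain ⟨U', ⟨hgr, hle, f', hf', hff⟩, hmax⟩ := exists_max
    (fun U' : Submodule A.carrier Q.carrier => Gr Q U' ∧ ∃ hle : U ≤ U',
      ∃ f' : U' →ₗ[A.carrier] (S.pco π).carrier, HomOn Q (S.pco π) U' f' e ∧
        ∀ x (h : x ∈ U), f' ⟨x, hle h⟩ = f ⟨x, h⟩) (W := U) ⟨hU, le_rfl, f, hf, fun _ _ => rfl⟩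
  by_cases htop : U' = ⊤
  · subst htop
    exact ⟨f' ∘ₗ LinearMap.id.codRestrict ⊤ (fun _ => trivial), fun i x hx => hf' i _ hx,
      fun x h => hff x h⟩
  exfalso
  obtain ⟨σ, d, g, hg, hg0, -⟩ := hom_Δ_ne_zero S (Gr.top (quot Q U' hgr))
    (W := ⊤) (by
      have := Submodule.Quotient.nontrivial_iff.2 htop
      exact top_ne_bot)
  obtain ⟨u, hu, hu'⟩ := lift_proj (S.proj σ) (mkQ_mem Q U' hgr) (comp_mem (dm_mem S σ) hg)
    (by rw [LinearMap.range_eq_top.2 U'.mkQ_surjective]; exact le_top)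
  rw [zero_add, sub_zero] at hu
  have huU : ∀ x, u x ∈ U' ↔ g (dm S σ x) = 0 := fun x => by
    rw [← Submodule.Quotient.mk_eq_zero U']
    exact ⟨fun h => (hu' x).symm.trans h, fun h => (hu' x).trans h⟩
  have hnle : ¬ LinearMap.range u ≤ U' := by
    intro h
    refine hg0 (LinearMap.ext fun y => ?_)
    obtain ⟨x, rfl⟩ := dm_surj S σ y
    exact (huU x).1 (h ⟨x, rfl⟩)
  have hσ : ¬ π ≤ σ := fun h => hnle ((hUP σ h d u hu).trans hle)
  have hKr : ∀ x ∈ Kr S σ, u x ∈ U' := by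
    intro x hx
    have : dm S σ x = 0 := hx
    rw [huU, this, map_zero]
  let r : Kr S σ →ₗ[A.carrier] U' := (u ∘ₗ (Kr S σ).subtype).codRestrict U'
    fun x => hKr x.1 x.2
  obtain ⟨t, ht, htr, -⟩ := pco_good S π σ (d + e) (f' ∘ₗ r) (fun i x hx => by
    rw [← add_assoc]
    exact hf' _ _ (hu i x.1 hx)) (fun _ => trivial)
  have hWd : Gr (S.P σ) (U'.comap u) := hgr.comap hu
  -- the difference of the two candidate values on the overlap
  let D : (sub (S.P σ) _ hWd).carrier →ₗ[A.carrier] (S.pco π).carrier :=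
    f' ∘ₗ (u ∘ₗ (U'.comap u).subtype).codRestrict U' (fun x => x.2) - t ∘ₗ (U'.comap u).subtype
  have hD : D ∈ ghomSet (sub (S.P σ) _ hWd) (S.pco π) (d + e) := by
    intro i x hx
    refine sub_mem ?_ (ht i x.1 hx)
    rw [← add_assoc]
    exact hf' _ _ (hu i x.1 hx)
  have hD0 : D = 0 := by
    by_contra hne
    have h1 : LinearMap.range (f0 S π) ≤ LinearMap.range D :=
      range_f0_le S (Gr.range hD) (by rwa [Ne, LinearMap.range_eq_bot])
    obtain ⟨l, hl, hl'⟩ := lift_proj (S.proj π) hD (comp_mem (dm_mem S π) (f0_mem S π))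
      (by rintro _ ⟨x, rfl⟩; exact h1 ⟨_, rfl⟩)
    refine f0_ne S π (LinearMap.ext fun y => ?_)
    obtain ⟨x, rfl⟩ := dm_surj S π y
    have h2 := le_Kr S hσ (f := (U'.comap u).subtype ∘ₗ l) (fun i x hx => hl i x hx) ⟨x, rfl⟩
    have h3 : D (l x) = 0 := sub_eq_zero.2 (htr _ h2).symm
    rw [LinearMap.zero_apply, ← h3]
    exact (hl' x).symm
  obtain ⟨f'', hf'', h1, h2⟩ := glue hgr hu hf' ht (fun x h => by
    have h3 : D ⟨x, h⟩ = 0 := by rw [hD0]; rfl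
    exact sub_eq_zero.1 h3)
  have h3 := hmax _ ⟨hgr.sup (Gr.range hu), hle.trans le_sup_left, f'', hf'', fun x h => by
    rw [h1 x (hle h), hff]⟩ le_sup_left
  exact hnle (by rw [← h3]; exact le_sup_right)

lemma hom_eq_f0' {π : Idx} {n : ℤ} {f : (S.Δ π).carrier →ₗ[A.carrier] (S.pco π).carrier}
    (hf : f ∈ ghomSet (S.Δ π) (S.pco π) n) : ∃ c : k, f = c • f0 S π ∧ (n ≠ 0 → c = 0) := by
  obtain ⟨c, rfl⟩ := hom_eq_f0 S hf
  refine ⟨c, rfl, fun hn => ?_⟩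
  by_contra hc
  refine f0_ne S π (hom_ext fun i x hx => ?_)
  have h1 := f0_mem S π i x hx
  have h2 := hf i x hx
  rw [LinearMap.smul_apply, Submodule.smul_mem_iff _ hc] at h2
  rw [LinearMap.zero_apply, ← pr_of_mem _ h1, pr_of_ne _ h2 (by omega)]

variable {S}

/-- A nonzero map from a projective `P(π)` of minimal weighted degree. -/
lemma exists_min (b : Bounds S) {X : GMod A} (hX : Nontrivial X.carrier) :
    ∃ (π : Idx) (d : ℤ), ∃ φ ∈ ghomSet (S.P π) X d, φ ≠ 0 ∧
      ∀ τ e, e + b.c π < d + b.c τ → ∀ f ∈ ghomSet (S.P τ) X e, f = 0 := by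
  choose B hB hB' using fun π => hom_bdd S.laur (S.P π) X
  let p : ℤ → Prop := fun v => ∃ π, ∃ φ ∈ ghomSet (S.P π) X (v + b.c π), φ ≠ 0
  have hp : ∃ v, p v := by
    obtain ⟨σ, d, f, hf, hf0⟩ := hom_ne_zero_top S hX
    exact ⟨d - b.c σ, σ, f, by rwa [sub_add_cancel], hf0⟩
  have hb : ∃ m : ℤ, ∀ z, p z → m ≤ z := by
    refine ⟨-∑ π, (B π + |b.c π|), ?_⟩
    rintro z ⟨π, φ, hφ, h0⟩
    by_contra hlt
    refine h0 (hB' π _ ?_ φ hφ)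
    have h1 := Finset.single_le_sum (f := fun p => B p + |b.c p|)
      (fun p _ => add_nonneg (hB p) (abs_nonneg _)) (Finset.mem_univ π)
    have h2 := le_abs_self (b.c π)
    omega
  obtain ⟨v, ⟨π, φ, hφ, h0⟩, hmin⟩ := Int.exists_least_of_bdd hb hp
  refine ⟨π, _, φ, hφ, h0, fun τ e he f hf => ?_⟩
  by_contra hne
  have := hmin (e - b.c τ) ⟨τ, f, by rwa [sub_add_cancel], hne⟩
  omega

/-- Lifting of maps defined on a submodule of `P(σ)` built from standard layers. -/
lemma lift_chain {X Y : GMod A} {N : Submodule A.carrier X.carrier} (hN : GoodSub S X N)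
    {a : ℤ} {g : X.carrier →ₗ[A.carrier] Y.carrier} (hg : g ∈ ghomSet X Y a)
    (hgN : ∀ x, g x = 0 ↔ x ∈ N) {σ : Idx} {W : Submodule A.carrier (S.P σ).carrier}
    (hW : DChain S σ W) : ∀ (e : ℤ) (t : W →ₗ[A.carrier] Y.carrier), HomOn (S.P σ) Y W t e →
      (∀ x, t x ∈ LinearMap.range g) →
      ∃ t' : W →ₗ[A.carrier] X.carrier, HomOn (S.P σ) X W t' (e - a) ∧ ∀ x, g (t' x) = t x := by
  have := S.noeth
  induction hW with
  | bot =>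
    intro e t _ _
    refine ⟨0, fun i x _ => by simp, fun x => ?_⟩
    have : x = 0 := Subsingleton.elim _ _
    rw [this, map_zero, map_zero, map_zero]
  | @step W τ s u hτ hW hu h ih =>
    intro e t ht htr
    let uu : (S.P τ).carrier →ₗ[A.carrier] ↥(W ⊔ LinearMap.range u) :=
      u.codRestrict (W ⊔ LinearMap.range u) fun x =>
        (le_sup_right : _ ≤ W ⊔ LinearMap.range u) ⟨x, rfl⟩
    obtain ⟨t1, ht1, ht1'⟩ := ih e (t ∘ₗ Submodule.inclusion le_sup_left)
      (fun i x hx => ht i _ hx) (fun x => htr _)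
    have htu : t ∘ₗ uu ∈ ghomSet (S.P τ) Y (s + e) := fun i x hx => by
      rw [← add_assoc]; exact ht _ _ (hu i x hx)
    obtain ⟨l, hl, hl'⟩ := lift_proj (S.proj τ) hg htu (by rintro _ ⟨x, rfl⟩; exact htr _)
    rw [add_sub_assoc] at hl
    let r : Kr S τ →ₗ[A.carrier] W := (u ∘ₗ (Kr S τ).subtype).codRestrict W
      fun x => (h x.1).2 x.2
    obtain ⟨m, hm, hm1, hm2⟩ := hN τ (s + (e - a)) (l ∘ₗ (Kr S τ).subtype - t1 ∘ₗ r)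
      (fun i x hx => by
        refine sub_mem (hl i x.1 hx) ?_
        rw [← add_assoc]; exact ht1 _ _ (hu i x.1 hx))
      (fun x => by
        rw [← hgN]
        show g (l x.1 - t1 (r x)) = 0
        rw [map_sub, hl', ht1', sub_eq_zero]; rfl)
    obtain ⟨t2, ht2, h1, h2⟩ := glue hW.gr hu ht1 (t := l - m)
      (fun i x hx => sub_mem (hl i x hx) (hm i x hx)) (fun x hx => by
        rw [LinearMap.sub_apply, hm1 x ((h x).1 hx)]
        show _ = l x - (l x - t1 _)
        rw [sub_sub_cancel]; rfl)
    refine ⟨t2, ht2, ?_⟩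
    rintro ⟨y, hy⟩
    obtain ⟨w, hw, _, ⟨p, rfl⟩, rfl⟩ := Submodule.mem_sup.1 hy
    have e1 : (⟨w + u p, hy⟩ : ↥(W ⊔ LinearMap.range u)) =
      ⟨w, (le_sup_left : W ≤ W ⊔ LinearMap.range u) hw⟩ +
      ⟨u p, (le_sup_right : _ ≤ W ⊔ LinearMap.range u) ⟨p, rfl⟩⟩ := rfl
    rw [e1, map_add, map_add, map_add, h1 w hw, h2, ht1', LinearMap.sub_apply, map_sub,
      (hgN _).2 (hm2 p), sub_zero, hl']
    rfl

end
end Tilt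

namespace Tilt

section
variable {S : AHW A Idx}

/-- If `X` is nonzero with `ext¹(Δ(σ), X) = 0` for all `σ`, then `X` has a quotient `∇̄(π)` whose
kernel has the same property, and the quotient already sees an element of low degree. -/
theorem one_step (b : Bounds S) {X : GMod A} (hX : Nontrivial X.carrier) (hgood : GoodSub S X ⊤) :
    ∃ N : Submodule A.carrier X.carrier, Gr X N ∧ GoodSub S X N ∧
      (∃ (π : Idx) (d : ℤ), SQ X ⊤ N (S.pco π) d) ∧
      ∀ ρ e, ∀ h ∈ ghomSet (S.P ρ) X e, h ≠ 0 →
        ∃ i ≤ e + b.G + b.D, ∃ x ∈ X.grading i, x ∉ N := by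
  have := S.noeth
  have := noethM X
  obtain ⟨π, d, φ, hφ, hφ0, hmin⟩ := exists_min b hX
  have hC1 := b.nonneg1
  have hC2 := b.nonneg2
  -- maps from `P(π)` of degree close to the minimal one factor through `Δ(π)`
  have hkill : ∀ e ≤ d + b.C1, ∀ ψ ∈ ghomSet (S.P π) X e, ∀ x ∈ Kr S π, ψ x = 0 := by
    intro e he ψ hψ x hx
    have := b.hom_Kr π X e (fun τ hτ e' he' => hmin τ e' (by have := b.lt π τ hτ; omega))
      (ψ ∘ₗ (Kr S π).subtype) (fun i x hx => hψ i x.1 hx)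
    exact LinearMap.congr_fun this ⟨x, hx⟩
  -- `X / N` is a quotient whose nonzero graded submodules all contain the image of `φ`
  obtain ⟨N, ⟨hN, hNφ⟩, hNmax⟩ := exists_max
    (fun N : Submodule A.carrier X.carrier => Gr X N ∧ ¬ LinearMap.range φ ≤ N) (W := ⊥)
    ⟨Gr.bot X, by rwa [le_bot_iff, LinearMap.range_eq_bot]⟩
  have hNmax' : ∀ V, Gr X V → N ≤ V → V ≠ N → LinearMap.range φ ≤ V := fun V hV hle hne => by
    by_contra h
    exact hne (hNmax V ⟨hV, h⟩ hle)
  have hq := mkQ_mem X N hN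
  have hqz : ∀ x, N.mkQ x = 0 ↔ x ∈ N := fun x => Submodule.Quotient.mk_eq_zero N
  have hqφ0 : N.mkQ ∘ₗ φ ≠ 0 := by
    intro h
    refine hNφ ?_
    rintro _ ⟨x, rfl⟩
    exact (hqz _).1 (LinearMap.congr_fun h x)
  -- the image of `φ` in `X / N` contains the image of every map from `P(τ)`, `τ ≥ π`
  have hc : ∀ τ, π ≤ τ → ∀ e, ∀ ψ ∈ ghomSet (S.P τ) (quot X N hN) e,
      LinearMap.range ψ ≤ LinearMap.range (N.mkQ ∘ₗ φ) := by
    intro τ hτ e ψ hψ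
    obtain ⟨l, hl, hl'⟩ := lift_proj (S.proj τ) hq hψ
      (by rw [LinearMap.range_eq_top.2 N.mkQ_surjective]; exact le_top)
    rw [sub_zero] at hl
    by_cases hlN : LinearMap.range l ≤ N
    · rintro _ ⟨x, rfl⟩
      rw [← hl', (hqz _).2 (hlN ⟨x, rfl⟩)]; exact Submodule.zero_mem _
    have hl0 : l ≠ 0 := by
      rintro rfl; exact hlN (by rw [LinearMap.range_zero]; exact bot_le)
    have h1 : LinearMap.range φ ≤ N ⊔ LinearMap.range l :=
      hNmax' _ (hN.sup (Gr.range hl)) le_sup_left fun h => hlN (by rw [← h]; exact le_sup_right)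
    obtain ⟨β, hβ, hβ'⟩ := lift_proj (S.proj π) hψ (comp_mem hφ hq) (by
      rintro _ ⟨x, rfl⟩
      obtain ⟨n, hn, _, ⟨y, rfl⟩, hxy⟩ := Submodule.mem_sup.1 (h1 ⟨x, rfl⟩)
      refine ⟨y, ?_⟩
      show ψ y = N.mkQ (φ x)
      rw [← hl', ← hxy, map_add, (hqz _).2 hn, zero_add])
    rw [add_zero] at hβ
    have hβ0 : β ≠ 0 := by
      rintro rfl
      exact hqφ0 (LinearMap.ext fun x => by rw [← hβ']; simp)
    have he : e ≤ d + b.C1 := by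
      by_contra h
      exact hβ0 (b.hom_P π τ _ (by omega) β hβ)
    rcases hτ.eq_or_lt with rfl | hlt
    · have he' : d ≤ e := by
        by_contra h
        exact hl0 (hmin π e (by omega) l hl)
      obtain ⟨α, hα, hα'⟩ := fac_dm S hl (hkill e he l hl)
      have hdβ : dm S π ∘ₗ β ∈ ghomSet (S.P π) (S.Δ π) (d - e) := by
        have := comp_mem hβ (dm_mem S π)
        rwa [add_zero] at this
      obtain ⟨γ, hγ, hγ'⟩ := fac_dm S hdβ (kills_Kr S hdβ)
      obtain ⟨c, -, hc⟩ := end_comp S (by omega) hγ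
      have key : ∀ x, N.mkQ (φ x) = c • ψ x := by
        intro x
        have h2 : dm S π (β x) = c • dm S π x := by rw [← hc, hγ']; rfl
        have h3 : l (β x) = c • l x := by
          rw [← hα', h2, LinearMap.map_smul_of_tower, hα']
        have h4 : N.mkQ (φ x) = ψ (β x) := (hβ' x).symm
        rw [h4, ← hl', h3, ← hl']
        exact LinearMap.map_smul_of_tower _ _ _
      have hc0 : c ≠ 0 := by
        rintro rfl
        exact hqφ0 (LinearMap.ext fun x => by
          rw [LinearMap.comp_apply, key, zero_smul]; rfl)
      rintro _ ⟨x, rfl⟩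
      refine ⟨c⁻¹ • x, ?_⟩
      rw [LinearMap.comp_apply, key, LinearMap.map_smul_of_tower, smul_smul, mul_inv_cancel₀ hc0,
        one_smul]
    · exact absurd (hmin τ e (by have := b.lt π τ hlt; omega) l hl) hl0
  obtain ⟨α, hα, hα'⟩ := fac_dm S hφ (hkill d (by omega) φ hφ)
  let α1 : (S.Δ π).carrier →ₗ[A.carrier] (quot X N hN).carrier := N.mkQ ∘ₗ α
  have hα1 : α1 ∈ ghomSet (S.Δ π) (quot X N hN) d := by
    have := comp_mem hα hq
    rwa [add_zero] at this
  have hα1' : ∀ x, α1 (dm S π x) = N.mkQ (φ x) := fun x => by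
    show N.mkQ (α (dm S π x)) = _
    rw [hα']
  have hr : LinearMap.range α1 = LinearMap.range (N.mkQ ∘ₗ φ) := by
    ext y
    constructor
    · rintro ⟨z, rfl⟩
      obtain ⟨x, rfl⟩ := dm_surj S π z
      exact ⟨x, (hα1' x).symm⟩
    · rintro ⟨x, rfl⟩
      exact ⟨_, hα1' x⟩
  -- `ker α1 ≤ ker f0`, because `P(π)` is local
  have hker : ∀ y, α1 y = 0 → f0 S π y = 0 := by
    by_contra! hcon
    obtain ⟨y0, hy0, hy1⟩ := hcon
    have h1 : LinearMap.range (f0 S π) ≤ (LinearMap.ker α1).map (f0 S π) := by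
      refine range_f0_le S ((Gr.ker hα1).map (f0_mem S π)) ?_
      intro h
      have : f0 S π y0 ∈ (LinearMap.ker α1).map (f0 S π) := ⟨y0, hy0, rfl⟩
      rw [h] at this
      exact hy1 this
    rcases local_P S (V := (LinearMap.ker α1).comap (dm S π))
      (W := (LinearMap.ker (f0 S π)).comap (dm S π))
      ((Gr.ker hα1).comap (dm_mem S π)) (eq_top_iff.2 fun x _ => by
        obtain ⟨y, hy, hyx⟩ := h1 ⟨dm S π x, rfl⟩
        obtain ⟨z, rfl⟩ := dm_surj S π y
        have : x = z + (x - z) := by abel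
        rw [this]
        refine Submodule.add_mem_sup hy ?_
        show f0 S π (dm S π (x - z)) = 0
        rw [map_sub, map_sub, hyx, sub_self])
      ((Gr.ker (f0_mem S π)).comap (dm_mem S π)) with h | h
    · refine hqφ0 (LinearMap.ext fun x => ?_)
      have : x ∈ (LinearMap.ker α1).comap (dm S π) := by rw [h]; trivial
      rw [LinearMap.comp_apply, ← hα1']
      exact this
    · refine f0_ne S π (LinearMap.ext fun y => ?_)
      obtain ⟨x, rfl⟩ := dm_surj S π y
      have : x ∈ (LinearMap.ker (f0 S π)).comap (dm S π) := by rw [h]; trivial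
      exact this
  have hU : Gr (quot X N hN) (LinearMap.range α1) := Gr.range hα1
  obtain ⟨f, hf, hf'⟩ := fac (L := S.Δ π) (M := sub _ _ hU) (p := α1.rangeRestrict) (a := d)
    (fun i x hx => hα1 i x hx) α1.surjective_rangeRestrict (f0_mem S π)
    (fun x hx => hker x (congrArg Subtype.val hx))
  obtain ⟨F, hF, hF'⟩ := extend_to_pco S hU
    (fun τ hτ e ψ hψ => by rw [hr]; exact hc τ hτ e ψ hψ) (f := f) (e := 0 - d) hf
  rw [zero_sub] at hF
  have hFα : ∀ y, F (α1 y) = f0 S π y := fun y => (hF' _ ⟨y, rfl⟩).trans (hf' y)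
  have hFinj : LinearMap.ker F = ⊥ := by
    by_contra hne
    have hgr : Gr X ((LinearMap.ker F).comap N.mkQ) := (Gr.ker hF).comap hq
    have h1 := hNmax' _ hgr (fun x hx => by
        show F (N.mkQ x) = 0
        rw [(hqz x).2 hx, map_zero]) (fun h => hne (by
        rw [← Submodule.map_comap_eq_of_surjective N.mkQ_surjective (LinearMap.ker F), h]
        exact Submodule.mkQ_map_self N))
    refine f0_ne S π (LinearMap.ext fun y => ?_)
    obtain ⟨x, rfl⟩ := dm_surj S π y
    rw [← hFα, hα1']
    exact h1 ⟨x, rfl⟩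
  let g : X.carrier →ₗ[A.carrier] (S.pco π).carrier := F ∘ₗ N.mkQ
  have hg : g ∈ ghomSet X (S.pco π) (-d) := by
    have := comp_mem hq hF
    rwa [zero_add] at this
  have hgN : ∀ x, g x = 0 ↔ x ∈ N := fun x => by
    rw [← hqz]
    exact map_eq_zero_iff F (LinearMap.ker_eq_bot.1 hFinj)
  have hgα : ∀ y, g (α y) = f0 S π y := hFα
  -- an extension `u : P(σ) → X` of a map into `N` induces `Δ(σ) → ∇̄(π)`, which is zero or a
  -- multiple of `f0`, and in the latter case subtracting a multiple of `φ` moves `u` into `N`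
  have hNgood : GoodSub S X N := by
    intro σ e f hf hfN
    obtain ⟨u, hu, huf, -⟩ := hgood σ e f hf (fun _ => trivial)
    have hgu := comp_mem hu hg
    obtain ⟨h, hh, hh'⟩ := fac_dm S hgu (fun x hx => by
      rw [LinearMap.comp_apply, huf x hx]; exact (hgN _).2 (hfN _))
    by_cases hσ : σ = π
    · subst hσ
      obtain ⟨c, rfl, hc⟩ := hom_eq_f0' S hh
      refine ⟨u - c • φ, ?_, fun x hx => ?_, fun x => ?_⟩
      · intro i x hx
        refine sub_mem (hu i x hx) ?_
        by_cases hed : e + -d = 0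
        · have : e = d := by omega
          subst this
          exact Submodule.smul_mem _ _ (hφ i x hx)
        · rw [hc hed, zero_smul]; exact Submodule.zero_mem _
      · rw [LinearMap.sub_apply, LinearMap.smul_apply, hkill d (by omega) φ hφ x hx, smul_zero,
          sub_zero, huf]
      · rw [← hgN, LinearMap.sub_apply, map_sub, LinearMap.smul_apply,
          LinearMap.map_smul_of_tower, ← hα', hgα, sub_eq_zero]
        exact (hh' x).symm
    · have h0 := hom_eq_zero S hh hσ
      refine ⟨u, hu, huf, fun x => ?_⟩
      rw [← hgN]
      exact (hh' x).symm.trans (by rw [h0]; rfl)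
  -- a nonzero map `h` from `Δ(σ)` to the cokernel of `g` would lift to `P(σ) → ∇̄(π)`, and after
  -- correction by the range of `g`, to `Δ(σ) → ∇̄(π)`; but all such maps land in the range of `g`
  have hgs : Function.Surjective g := by
    rw [← LinearMap.range_eq_top]
    by_contra hne
    have hR : Gr (S.pco π) (LinearMap.range g) := Gr.range hg
    obtain ⟨σ, e, h, hh, hh0, -⟩ := hom_Δ_ne_zero S (Gr.top (quot _ _ hR)) (W := ⊤) (by
      have := Submodule.Quotient.nontrivial_iff.2 hne
      exact top_ne_bot)
    obtain ⟨t, ht, ht'⟩ := lift_proj (S.proj σ) (mkQ_mem _ _ hR) (comp_mem (dm_mem S σ) hh)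
      (by rw [LinearMap.range_eq_top.2 (Submodule.mkQ_surjective _)]; exact le_top)
    rw [zero_add, sub_zero] at ht
    have htR : ∀ x, t x ∈ LinearMap.range g ↔ h (dm S σ x) = 0 := fun x => by
      rw [← Submodule.Quotient.mk_eq_zero (LinearMap.range g)]
      exact ⟨fun h => (ht' x).symm.trans h, fun h => (ht' x).trans h⟩
    obtain ⟨t1, ht1, ht1'⟩ := lift_chain hNgood hg hgN (dchain_Kr S σ) e
      (t ∘ₗ (Kr S σ).subtype) (fun i x hx => ht i x.1 hx) (fun x => by
        have : dm S σ x.1 = 0 := x.2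
        show t x.1 ∈ _
        rw [htR, this, map_zero])
    obtain ⟨T, hT, hT1, -⟩ := hgood σ _ t1 ht1 (fun _ => trivial)
    have hv : t - g ∘ₗ T ∈ ghomSet (S.P σ) (S.pco π) e := by
      intro i x hx
      refine sub_mem (ht i x hx) ?_
      have := comp_mem hT hg i x hx
      rwa [sub_add_cancel] at this
    obtain ⟨w, hw, hw'⟩ := fac_dm S hv (fun x hx => by
      rw [LinearMap.sub_apply, LinearMap.comp_apply, hT1 x hx, ht1', sub_eq_zero]; rfl)
    have hwr : ∀ y, w y ∈ LinearMap.range g := by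
      intro y
      by_cases hσ : σ = π
      · subst hσ
        obtain ⟨c, rfl⟩ := hom_eq_f0 S hw
        exact ⟨c • α y, by rw [LinearMap.map_smul_of_tower, hgα]; rfl⟩
      · rw [hom_eq_zero S hw hσ]; exact Submodule.zero_mem _
    refine hh0 (LinearMap.ext fun y => ?_)
    obtain ⟨x, rfl⟩ := dm_surj S σ y
    rw [LinearMap.zero_apply, ← htR]
    have : t x = w (dm S σ x) + g (T x) := by
      rw [hw', LinearMap.sub_apply, LinearMap.comp_apply, sub_add_cancel]
    rw [this]
    exact add_mem (hwr _) ⟨_, rfl⟩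
  refine ⟨N, hN, hNgood, ⟨π, -d, g ∘ₗ (⊤ : Submodule A.carrier X.carrier).subtype, ?_,
    fun x => hgN x.1, fun i x hx => hg i x.1 hx⟩, ?_⟩
  · intro y
    obtain ⟨x, rfl⟩ := hgs y
    exact ⟨⟨x, trivial⟩, rfl⟩
  · intro ρ e h hh hh0
    have h1 : d + b.c ρ ≤ e + b.c π := by
      by_contra hlt
      exact hh0 (hmin ρ e (by omega) h hh)
    have h2 := b.diff π ρ
    by_contra! hcon
    refine hNφ ?_
    have h3 := b.gen π (N.comap φ) (fun i hi x hx =>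
      hcon (i + d) (by omega) _ (hφ i x hx))
    rintro _ ⟨x, rfl⟩
    have : x ∈ N.comap φ := by rw [h3]; trivial
    exact this

/-! ### Modules without higher extensions have a costandard filtration -/

lemma step_sub (b : Bounds S) (X : GMod A) (Y : Submodule A.carrier X.carrier) (hY : Gr X Y)
    (hgood : GoodSub S X Y) :
    ∃ N ≤ Y, Gr X N ∧ GoodSub S X N ∧
      (Y ≤ N ∨ ∃ (π : Idx) (d : ℤ), SQ X Y N (S.pco π) d) ∧
      ∀ ρ e, ∀ h ∈ ghomSet (S.P ρ) X e, h ≠ 0 → LinearMap.range h ≤ Y →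
        ∃ i ≤ e + b.G + b.D, ∃ x ∈ X.grading i, x ∈ Y ∧ x ∉ N := by
  have := S.noeth
  by_cases hY0 : Y = ⊥
  · refine ⟨Y, le_rfl, hY, hgood, Or.inl le_rfl, fun ρ e h _ hh0 hr => absurd ?_ hh0⟩
    rwa [hY0, le_bot_iff, LinearMap.range_eq_bot] at hr
  have hg1 : GoodSub S (sub X Y hY) ⊤ := by
    intro σ d f hf _
    obtain ⟨g, hg, h1, h2⟩ := hgood σ d (Y.subtype ∘ₗ f) (fun i x hx => hf i x hx)
      (fun x => (f x).2)
    exact ⟨g.codRestrict Y h2, fun i x hx => hg i x hx, fun x h => Subtype.ext (h1 x h),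
      fun _ => trivial⟩
  obtain ⟨N, hN, hNg, ⟨π, d, g, hgs, hgk, hgd⟩, hdet⟩ :=
    one_step b (X := sub X Y hY) (Submodule.nontrivial_iff_ne_bot.2 hY0) hg1
  have hmem : ∀ x : Y, x.1 ∈ N.map Y.subtype ↔ x ∈ N := fun x => by
    constructor
    · rintro ⟨y, hy, hyx⟩
      have : y = x := Subtype.ext hyx
      rwa [← this]
    · intro h; exact ⟨x, h, rfl⟩
  have hle : N.map Y.subtype ≤ Y := by
    rintro _ ⟨x, _, rfl⟩; exact x.2
  refine ⟨N.map Y.subtype, hle, ?_, ?_, Or.inr ⟨π, d, ?_⟩, ?_⟩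
  · exact hN.map (M := sub X Y hY) (N := X) (f := Y.subtype) (d := 0)
      (fun i x hx => by rw [add_zero]; exact hx)
  · intro σ d f hf hfN
    obtain ⟨g, hg, h1, h2⟩ := hNg σ d (f.codRestrict Y fun x => hle (hfN x))
      (fun i x hx => hf i x hx) (fun x => (hmem _).1 (hfN x))
    exact ⟨Y.subtype ∘ₗ g, fun i x hx => hg i x hx, fun x h => congrArg Subtype.val (h1 x h),
      fun x => (hmem _).2 (h2 x)⟩
  · let g' : Y →ₗ[A.carrier] (S.pco π).carrier :=
      g ∘ₗ LinearMap.id.codRestrict (⊤ : Submodule A.carrier Y) (fun _ => trivial)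
    refine ⟨g', fun y => ?_, fun x => ?_, fun i x hx => hgd i ⟨x, trivial⟩ hx⟩
    · obtain ⟨x, rfl⟩ := hgs y
      exact ⟨x.1, rfl⟩
    · rw [hmem]; exact hgk ⟨x, trivial⟩
  · intro ρ e h hh hh0 hr
    obtain ⟨i, hi, x, hx, hxN⟩ := hdet ρ e (h.codRestrict Y fun x => hr ⟨x, rfl⟩)
      (fun i x hx => hh i x hx) (fun h0 => hh0 (LinearMap.ext fun x =>
        congrArg Subtype.val (LinearMap.congr_fun h0 x)))
    exact ⟨i, hi, x.1, hx, x.2, fun h => hxN ((hmem x).1 h)⟩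

/-- Iterated peeling gives a `∇̄`-filtration. If it were not separated, a fixed nonzero map from
some `P(ρ)` into its intersection would force every step to remove something from one fixed
finite-dimensional space. -/
theorem good_imp_pcFilt {X : GMod A} (hX : GoodSub S X ⊤) : HasPCFilt S X := by
  have := S.noeth
  obtain ⟨b⟩ := exists_bounds S
  let Ty := {Y : Submodule A.carrier X.carrier // Gr X Y ∧ GoodSub S X Y}
  choose st hle hgr hgd hsq hdet using fun Y : Ty => step_sub b X Y.1 Y.2.1 Y.2.2
  let F : ℕ → Ty := fun n => Nat.rec ⟨⊤, Gr.top X, hX⟩ (fun _ Y => ⟨st Y, hgr Y, hgd Y⟩) n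
  have hF : ∀ n, (F (n + 1)).1 = st (F n) := fun n => rfl
  have hanti : Antitone fun n => (F n).1 := antitone_nat_of_succ_le fun n => hle (F n)
  refine ⟨⟨fun n => (F n).1, rfl, fun n => hle (F n), fun n => gr_iff.2 (F n).2.1, ?_⟩, ?_⟩
  · by_contra! hcon
    obtain ⟨x, hx, hx0⟩ := hcon
    have hI : Gr X (⨅ n, (F n).1) := fun i y hy => by
      rw [Submodule.mem_iInf] at hy ⊢
      exact fun n => (F n).2.1 i y (hy n)
    obtain ⟨ρ, e, h, hh, hh0, hr⟩ := hom_ne_zero S hI (fun h => hx0 (by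
      have : x ∈ ⨅ n, (F n).1 := (Submodule.mem_iInf _).2 hx
      rw [h] at this
      exact this))
    obtain ⟨U, hU, hU'⟩ := fin_dim_le S.laur X (e + b.G + b.D)
    -- the intersections with the finite-dimensional space `U` would strictly decrease forever
    let V : ℕ → Submodule k X.carrier := fun n => (F n).1.restrictScalars k ⊓ U
    have hV : ∀ n, Module.finrank k (V (n + 1)) < Module.finrank k (V n) := by
      intro n
      have : FiniteDimensional k (V n) := Submodule.finiteDimensional_inf_right _ _
      refine Submodule.finrank_lt_finrank_of_lt (lt_of_le_of_ne
        (inf_le_inf_right U (fun x hx => hle (F n) hx)) fun heq => ?_)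
      obtain ⟨i, hi, y, hy, hyY, hyN⟩ := hdet (F n) ρ e h hh hh0 (hr.trans (iInf_le _ n))
      have : y ∈ V n := ⟨hyY, hU' i hi hy⟩
      rw [← heq] at this
      exact hyN this.1
    have hV' : ∀ n, Module.finrank k (V n) + n ≤ Module.finrank k (V 0) := by
      intro n
      induction n with
      | zero => simp
      | succ n ih => have := hV n; omega
    have := hV' (Module.finrank k (V 0) + 1)
    omega
  · intro n
    rcases hsq (F n) with h | ⟨π, d, h⟩
    · exact Or.inl (sq_subsingleton h)
    · refine Or.inr ⟨_, ⟨π, rfl⟩, -d, ?_⟩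
      rw [sq_iff (F n).2.1, neg_neg]
      exact h

end
end Tilt

namespace Tilt

/-! ### Finiteness over a central subalgebra -/

lemma pr_bdd (M : GMod A) (x : M.carrier) : ∃ D : ℤ, ∀ n > D, pr M n x = 0 := by
  induction x using hom_ind with
  | h0 => exact ⟨0, fun n _ => map_zero _⟩
  | hh i x hx => exact ⟨i, fun n hn => pr_of_ne M hx (by omega)⟩
  | ha x y hx hy =>
    obtain ⟨D, hD⟩ := hx
    obtain ⟨D', hD'⟩ := hy
    refine ⟨max D D', fun n hn => ?_⟩
    rw [map_add, hD n (lt_of_le_of_lt (le_max_left _ _) hn),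
      hD' n (lt_of_le_of_lt (le_max_right _ _) hn), add_zero]

/-- Under `(♠)` a Noetherian Laurentian algebra is finite over a commutative Noetherian ring
mapping to its centre. -/
theorem central_finite [IsNoetherianRing A.carrier] (hl : A.Laurentian) (hs : A.Spade) :
    ∃ (R : Type) (_ : CommRing R) (_ : IsNoetherianRing R) (φ : R →+* A.carrier),
      (∀ r a, φ r * a = a * φ r) ∧
      ∃ s : Finset A.carrier, ∀ a, ∃ c : A.carrier → R, a = ∑ t ∈ s, φ (c t) * t := by
  obtain ⟨Z, hZ, hZneg, hZ0, -, hZc, s, hsZ⟩ := hs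
  let T : Set A.carrier := {z | ∃ i, 0 < i ∧ z ∈ Z i}
  let I : Submodule A.carrier A.carrier := Submodule.span A.carrier T
  obtain ⟨u, huT, hu⟩ :=
    Submodule.fg_span_iff_fg_span_finset_subset T |>.1 (IsNoetherian.noetherian I)
  have hdeg : ∀ z : u, ∃ i, 0 < i ∧ z.1 ∈ Z i := fun z => huT z.2
  choose deg hdeg0 hdegZ using hdeg
  let φ : MvPolynomial u k →ₐ[k] A.carrier := (Subalgebra.center k A.carrier).val.comp
    (MvPolynomial.aeval fun z : u => (⟨z.1, Subalgebra.mem_center_iff.2 fun a =>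
      (hZc _ _ (hdegZ z) a).symm⟩ : Subalgebra.center k A.carrier))
  have hφ : ∀ r a, φ r * a = a * φ r := fun r a =>
    (Subalgebra.mem_center_iff.1 (MvPolynomial.aeval (fun z : u => (⟨z.1,
      Subalgebra.mem_center_iff.2 fun a => (hZc _ _ (hdegZ z) a).symm⟩ :
        Subalgebra.center k A.carrier)) r).2 a).symm
  have hφX : ∀ z : u, φ (MvPolynomial.X z) = z.1 := fun z => by simp [φ]
  have hφC : ∀ c a, φ (MvPolynomial.C c) * a = c • a := fun c a => by
    have : φ (MvPolynomial.C c) = algebraMap k _ c := φ.commutes c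
    rw [this, Algebra.smul_def]
  refine ⟨MvPolynomial u k, inferInstance, inferInstance, φ.toRingHom, hφ, ?_⟩
  -- components of high degree lie in the ideal generated by the positive part of `Z`
  have hD : ∃ D : ℤ, ∀ n > D, ∀ t ∈ s, pr (reg A) n t = 0 := by
    choose D hD using pr_bdd (reg A)
    obtain ⟨B, hB⟩ := (s.image D).bddAbove
    refine ⟨B, fun n hn t ht => hD t n (lt_of_le_of_lt ?_ hn)⟩
    exact hB (Finset.mem_coe.2 (Finset.mem_image_of_mem _ ht))
  obtain ⟨D, hD⟩ := hD
  have hhigh : ∀ n > D, ∀ x ∈ A.grading n, x ∈ I := by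
    intro n hn x hx
    have hall : ∀ x : A.carrier, pr (reg A) n x ∈ I := by
      intro x
      have hx : x ∈ AddSubgroup.closure
        {x : A.carrier | ∃ i : ℤ, ∃ z ∈ Z i, ∃ t ∈ s, x = z * t} := by rw [hsZ]; trivial
      induction hx using AddSubgroup.closure_induction with
      | zero => rw [map_zero]; exact I.zero_mem
      | add x y _ _ hx hy => rw [map_add]; exact I.add_mem hx hy
      | neg x _ hx => rw [map_neg]; exact I.neg_mem hx
      | mem x hx =>
        obtain ⟨i, z, hz, t, ht, rfl⟩ := hx
        have h1 : pr (reg A) n (z * t) = z * pr (reg A) (n - i) t := by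
          have := pr_smul (reg A) (hZ i hz) (n - i) t
          rwa [add_sub_cancel] at this
        rw [h1]
        rcases lt_trichotomy i 0 with hi | hi | hi
        · rw [hZneg i hi, Submodule.mem_bot] at hz
          rw [hz, zero_mul]; exact I.zero_mem
        · subst hi
          rw [sub_zero, hD n hn t ht, mul_zero]; exact I.zero_mem
        · rw [hZc i z hz]
          exact I.smul_mem _ (Submodule.subset_span ⟨i, hi, hz⟩)
    have := hall x
    rwa [pr_of_mem (reg A) hx] at this
  obtain ⟨U, hU, hUD⟩ := fin_dim_le hl (reg A) D
  obtain ⟨s', hs'⟩ := (Submodule.fg_iff_finiteDimensional U).2 hU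
  let _ : Module (MvPolynomial u k) A.carrier := Module.compHom A.carrier φ.toRingHom
  have hsm : ∀ (r : MvPolynomial u k) (a : A.carrier), r • a = φ r * a := fun _ _ => rfl
  let W := Submodule.span (MvPolynomial u k) (s' : Set A.carrier)
  have hUW : ∀ x ∈ U, x ∈ W := by
    intro x hx
    rw [← hs'] at hx
    induction hx using Submodule.span_induction with
    | zero => exact W.zero_mem
    | add x y _ _ hx hy => exact W.add_mem hx hy
    | mem x hx => exact Submodule.subset_span hx
    | smul c x _ hx =>
      rw [← hφC, ← hsm]
      exact W.smul_mem _ hx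
  have hW : ∀ (m : ℕ) (n : ℤ), n ≤ D + m → ∀ x ∈ A.grading n, x ∈ W := by
    intro m
    induction m with
    | zero => intro n hn x hx; exact hUW x (hUD n (by simpa using hn) hx)
    | succ m ih =>
      intro n hn x hx
      push_cast at hn
      by_cases hnD : n ≤ D
      · exact hUW x (hUD n hnD hx)
      have hxI : x ∈ Submodule.span A.carrier (u : Set A.carrier) := by
        rw [← hu]; exact hhigh n (by omega) x hx
      obtain ⟨c, -, hc⟩ := Submodule.mem_span_finset.1 hxI
      rw [← pr_of_mem (reg A) hx, ← hc, map_sum, ← Finset.sum_coe_sort]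
      refine sum_mem fun z _ => ?_
      have h1 : c z.1 • z.1 = z.1 • c z.1 := (hZc _ _ (hdegZ z) _).symm
      have h2 := pr_smul (reg A) (hZ _ (hdegZ z)) (n - deg z) (c z.1)
      rw [add_sub_cancel] at h2
      rw [h1, h2]
      have h3 : z.1 • pr (reg A) (n - deg z) (c z.1) =
          (MvPolynomial.X z : MvPolynomial u k) • pr (reg A) (n - deg z) (c z.1) := by
        rw [hsm, hφX]; rfl
      rw [h3]
      exact W.smul_mem _ (ih _ (by have := hdeg0 z; omega) _ (pr_mem (reg A) _ _))
  refine ⟨s', fun a => ?_⟩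
  have ha : a ∈ W := by
    refine mem_of_pr (reg A) W.toAddSubmonoid fun i => ?_
    exact hW (i - D).toNat i (by have := Int.self_le_toNat (i - D); omega) _ (pr_mem (reg A) _ _)
  obtain ⟨c, -, hc⟩ := Submodule.mem_span_finset.1 ha
  exact ⟨c, hc.symm⟩

/-- Homogeneous maps `K → X` are combinations, with central coefficients, of finitely many
homogeneous ones. -/
theorem hom_finite [IsNoetherianRing A.carrier] (hl : A.Laurentian) (hs : A.Spade) (P X : GMod A)
    (K : Submodule A.carrier P.carrier) :
    ∃ (J : Type) (_ : Fintype J) (F : J → (K →ₗ[A.carrier] X.carrier)) (deg : J → ℤ),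
      (∀ j, HomOn P X K (F j) (deg j)) ∧ ∀ f d, HomOn P X K f d →
        ∃ c : J → A.carrier, (∀ j a, c j * a = a * c j) ∧ ∀ x, f x = ∑ j, c j • F j x := by
  obtain ⟨R, _, _, φ, hφ, s, hs⟩ := central_finite hl hs
  have := noethM P
  have := X.fg
  let _ : Module R A.carrier := Module.compHom A.carrier φ
  let _ : Module R X.carrier := Module.compHom X.carrier φ
  have hsm : ∀ (r : R) (x : X.carrier), r • x = φ r • x := fun _ _ => rfl
  have : IsScalarTower R A.carrier X.carrier := ⟨fun r a x => mul_smul (φ r) a x⟩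
  have : Module.Finite R A.carrier := ⟨s, by
    rw [eq_top_iff]
    intro a _
    obtain ⟨c, rfl⟩ := hs a
    exact sum_mem fun t ht => Submodule.smul_mem _ (c t) (Submodule.subset_span ht)⟩
  have : Module.Finite R X.carrier := Module.Finite.trans A.carrier X.carrier
  obtain ⟨n, v, hv⟩ := Module.Finite.exists_fin (R := A.carrier) (M := K)
  let T : Set (Fin n → X.carrier) := {w | ∃ f d, HomOn P X K f d ∧ w = fun i => f (v i)}
  obtain ⟨u, huT, hu⟩ := Submodule.fg_span_iff_fg_span_finset_subset (R := R) T |>.1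
    (IsNoetherian.noetherian _)
  have hF : ∀ w : u, ∃ f d, HomOn P X K f d ∧ w.1 = fun i => f (v i) := fun w => huT w.2
  choose F deg hF hFv using hF
  refine ⟨u, inferInstance, F, deg, hF, fun f d hf => ?_⟩
  have hfu : (fun i => f (v i)) ∈ Submodule.span R (u : Set (Fin n → X.carrier)) := by
    rw [← hu]; exact Submodule.subset_span ⟨f, d, hf, rfl⟩
  obtain ⟨c, -, hc⟩ := Submodule.mem_span_finset.1 hfu
  refine ⟨fun j => φ (c j.1), fun j a => hφ _ _, fun x => ?_⟩
  have hx : x ∈ Submodule.span A.carrier (Set.range v) := by rw [hv]; trivial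
  induction hx using Submodule.span_induction with
  | zero => simp
  | add x y _ _ hx hy => simp only [map_add, smul_add, Finset.sum_add_distrib, hx, hy]
  | smul a x _ hx =>
    rw [map_smul, hx, Finset.smul_sum]
    refine Finset.sum_congr rfl fun j _ => ?_
    rw [map_smul, smul_smul, smul_smul, hφ]
  | mem x hx =>
    obtain ⟨i, rfl⟩ := hx
    have h1 := congrFun hc i
    rw [Finset.sum_apply, ← Finset.sum_coe_sort] at h1
    rw [← h1]
    refine Finset.sum_congr rfl fun j _ => ?_
    rw [Pi.smul_apply, hsm, congrFun (hFv j) i]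

/-! ### Multiplicities in extensions -/

lemma mem_map_inj {X E : GMod A} {ι : X.carrier →ₗ[A.carrier] E.carrier}
    (hi : Function.Injective ι) {W : Submodule A.carrier X.carrier} {x : X.carrier} :
    ι x ∈ W.map ι ↔ x ∈ W :=
  ⟨by rintro ⟨y, hy, h⟩; exact hi h ▸ hy, fun h => ⟨x, h, rfl⟩⟩

lemma sq_map {X E N : GMod A} {ι : X.carrier →ₗ[A.carrier] E.carrier} (hι : ι ∈ ghomSet X E 0)
    (hi : Function.Injective ι) (W W' : Submodule A.carrier X.carrier) (d : ℤ) :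
    SQ E (W.map ι) (W'.map ι) N d ↔ SQ X W W' N d := by
  let e := Submodule.equivMapOfInjective ι hi W
  have he : ∀ x : W, (e x).1 = ι x.1 := fun x => rfl
  have hm : ∀ x : W, (e x).1 ∈ W'.map ι ↔ x.1 ∈ W' := fun x => by
    rw [he]; exact mem_map_inj hi
  constructor
  · rintro ⟨g, hs, hk, hg⟩
    refine ⟨g ∘ₗ e.toLinearMap, hs.comp e.surjective, fun x => ?_, fun i x hx => ?_⟩
    · rw [← hm]; exact hk (e x)
    · refine hg i (e x) ?_
      have := hι i _ hx
      rwa [add_zero] at this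
  · rintro ⟨g, hs, hk, hg⟩
    refine ⟨g ∘ₗ e.symm.toLinearMap, hs.comp e.symm.surjective, fun y => ?_, fun i y hy => ?_⟩
    · obtain ⟨x, rfl⟩ := e.surjective y
      rw [hm]
      simpa using hk x
    · obtain ⟨x, rfl⟩ := e.surjective y
      have h1 : x.1 ∈ X.grading i := mem_of_inj hι hi (by rw [add_zero]; exact hy)
      simpa using hg i x h1

section
variable {S : AHW A Idx}

lemma Δ_ne (σ : Idx) : ¬ Subsingleton (S.Δ σ).carrier := by
  intro h
  exact f0_ne S σ (LinearMap.ext fun x => by rw [Subsingleton.elim x 0, map_zero, map_zero])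

lemma sq_unique {M : GMod A} {W W' : Submodule A.carrier M.carrier} [IsNoetherianRing A.carrier]
    (hW : Gr M W) {σ τ : Idx} {d e : ℤ} (h1 : SQ M W W' (S.Δ σ) d) (h2 : SQ M W W' (S.Δ τ) e) :
    σ = τ := by
  obtain ⟨g, hs, hk, hg⟩ := h1
  obtain ⟨g', hs', hk', hg'⟩ := h2
  obtain ⟨w, hw, hw'⟩ := fac (L := sub M W hW) hg' hs' hg fun x hx => (hk x).2 ((hk' x).1 hx)
  by_contra hne
  have h0 := hom_eq_zero S (comp_mem hw (f0_mem S σ)) (Ne.symm hne)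
  refine f0_ne S σ (LinearMap.ext fun y => ?_)
  obtain ⟨x, rfl⟩ := hs y
  rw [← hw']
  exact LinearMap.congr_fun h0 _

lemma multCond_ext {X E : GMod A} {π σ : Idx} (hX : MultCond S X π) (hσ : σ < π)
    {ι : X.carrier →ₗ[A.carrier] E.carrier} (hι : ι ∈ ghomSet X E 0) (hi : Function.Injective ι)
    {n : ℤ} {g : E.carrier →ₗ[A.carrier] (S.Δ σ).carrier} (hg : g ∈ ghomSet E (S.Δ σ) n)
    (hgs : Function.Surjective g) (hex : LinearMap.range ι = LinearMap.ker g) :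
    MultCond S E π := by
  have := S.noeth
  obtain ⟨Φ, hΦ, ⟨N, hN⟩, hπ, hτ⟩ := hX
  have hgr : ∀ m, Gr X (Φ.F m) := fun m => gr_iff.1 (Φ.graded m)
  let F' : ℕ → Submodule A.carrier E.carrier := fun m => Nat.casesOn m ⊤ fun m => (Φ.F m).map ι
  have hgr' : ∀ m, Gr E (F' m) := by
    rintro (_ | m)
    · exact Gr.top E
    · exact (hgr m).map hι
  let Ψ : GFilt E :=
    { F := F'
      first := rfl
      anti := by
        rintro (_ | m)
        · exact le_top
        · exact Submodule.map_mono (Φ.anti m)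
      graded := fun m => gr_iff.2 (hgr' m)
      separated := by
        intro x hx
        obtain ⟨y, -, rfl⟩ := hx 1
        rw [Φ.separated y fun m => (mem_map_inj hi).1 (hx (m + 1)),
          map_zero] }
  have h0 : SQ E ⊤ ((Φ.F 0).map ι) (S.Δ σ) n := by
    refine ⟨g ∘ₗ (⊤ : Submodule A.carrier E.carrier).subtype, fun y => ?_, fun x => ?_,
      fun i x hx => hg i x.1 hx⟩
    · obtain ⟨x, rfl⟩ := hgs y
      exact ⟨⟨x, trivial⟩, rfl⟩
    · show g x.1 = 0 ↔ x.1 ∈ (Φ.F 0).map ι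
      rw [Φ.first, Submodule.map_top, hex]; rfl
  have hS : ∀ m d τ, SQIso E (F' (m + 1)) (F' (m + 1 + 1)) (GMod.shift d (S.Δ τ)) ↔
      SQIso X (Φ.F m) (Φ.F (m + 1)) (GMod.shift d (S.Δ τ)) := fun m d τ => by
    rw [sq_iff (hgr' (m + 1)), sq_iff (hgr m)]
    exact sq_map hι hi _ _ _
  have hmul : ∀ τ, τ ≠ σ → dMult S Ψ τ = dMult S Φ τ := by
    intro τ hne
    have : {m : ℕ | ∃ d : ℤ, SQIso E (Ψ.F m) (Ψ.F (m + 1)) (GMod.shift d (S.Δ τ))} =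
        Nat.succ '' {m : ℕ | ∃ d : ℤ, SQIso X (Φ.F m) (Φ.F (m + 1)) (GMod.shift d (S.Δ τ))} := by
      ext m
      constructor
      · rintro ⟨d, hd⟩
        rcases m with _ | m
        · exact absurd (sq_unique (hgr' 0) ((sq_iff (hgr' 0) d).1 hd) h0) hne
        · exact ⟨m, ⟨d, (hS m d τ).1 hd⟩, rfl⟩
      · rintro ⟨m, ⟨d, hd⟩, rfl⟩
        exact ⟨d, (hS m d τ).2 hd⟩
    unfold dMult
    rw [this]
    exact Set.ncard_image_of_injective _ Nat.succ_injective
  refine ⟨Ψ, ?_, ⟨N + 1, ?_⟩, ?_, fun τ h => ?_⟩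
  · rintro (_ | m)
    · refine Or.inr ⟨_, ⟨σ, rfl⟩, -n, ?_⟩
      rw [sq_iff (hgr' 0), neg_neg]; exact h0
    · rcases hΦ m with h | ⟨_, ⟨τ, rfl⟩, d, h⟩
      · exact Or.inl (sq_subsingleton (Submodule.map_mono (le_of_sq_subsingleton h)))
      · exact Or.inr ⟨_, ⟨τ, rfl⟩, d, (hS m d τ).2 h⟩
  · show (Φ.F N).map ι = ⊥
    rw [hN, Submodule.map_bot]
  · rw [hmul π hσ.ne', hπ]
  · rw [hmul τ (fun hh => h (hh ▸ hσ.le)), hτ τ h]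

lemma hom_P_multCond {X : GMod A} {π τ : Idx} (hX : MultCond S X π) (hτ : ¬ τ ≤ π) {d : ℤ}
    {f : (S.P τ).carrier →ₗ[A.carrier] X.carrier} (hf : f ∈ ghomSet (S.P τ) X d) : f = 0 := by
  have := S.noeth
  obtain ⟨Φ, hΦ, ⟨N, hN⟩, -, hmul⟩ := hX
  have hgr : ∀ m, Gr X (Φ.F m) := fun m => gr_iff.1 (Φ.graded m)
  have hanti : Antitone Φ.F := antitone_nat_of_succ_le Φ.anti
  have key : ∀ n, LinearMap.range f ≤ Φ.F n := by
    intro n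
    induction n with
    | zero => rw [Φ.first]; exact le_top
    | succ n ih =>
      rcases hΦ n with h | ⟨_, ⟨ρ, rfl⟩, e, h⟩
      · exact ih.trans (le_of_sq_subsingleton h)
      · have hρ : ρ ≤ π := by
          by_contra hρ
          have h0 := hmul ρ hρ
          unfold dMult at h0
          rw [Set.ncard_eq_zero (by
            refine (Set.finite_lt_nat N).subset ?_
            rintro m ⟨e, hm⟩
            by_contra hlt
            have hbot : Φ.F m = ⊥ := by
              rw [eq_bot_iff, ← hN]; exact hanti (not_lt.1 hlt)
            obtain ⟨g, hs, -, -⟩ := (sq_iff (hgr m) e).1 hm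
            have : Subsingleton (Φ.F m) := by rw [hbot]; infer_instance
            exact Δ_ne ρ hs.subsingleton)] at h0
          exact (Set.eq_empty_iff_forall_notMem.1 h0 n) ⟨e, h⟩
        obtain ⟨g, hs, hk, hg⟩ := (sq_iff (hgr n) e).1 h
        have h1 := hom_P_Δ S (fun h => hτ (h.trans hρ))
          (f := g ∘ₗ f.codRestrict (Φ.F n) fun x => ih ⟨x, rfl⟩) (d := d + -e)
          (fun i x hx => by rw [← add_assoc]; exact hg _ _ (hf i x hx))
        rintro _ ⟨x, rfl⟩
        exact (hk _).1 (LinearMap.congr_fun h1 x)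
  rw [← LinearMap.range_eq_bot, eq_bot_iff, ← hN]
  exact key N

/-! ### Universal extensions -/

variable (S)

/-- The vanishing of `ext¹(Δ(σ), X)`, in terms of extending maps from `ker (P(σ) → Δ(σ))`. -/
def EP (σ : Idx) (X : GMod A) : Prop :=
  ∀ (d : ℤ) (f : Kr S σ →ₗ[A.carrier] X.carrier), HomOn (S.P σ) X (Kr S σ) f d →
    ∃ g ∈ ghomSet (S.P σ) X d, ∀ x (h : x ∈ Kr S σ), g x = f ⟨x, h⟩

variable {S}

lemma ep_of_not_lt {X : GMod A} {π σ : Idx} (hX : MultCond S X π) (hσ : ¬ σ < π) : EP S σ X := by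
  intro d f hf
  obtain ⟨C, -, hC⟩ := exists_Kr_bound S σ
  have := hC X d (fun τ hτ e _ u hu =>
    hom_P_multCond hX (fun h => hσ (hτ.trans_le h)) hu) f hf
  subst this
  exact ⟨0, fun i x _ => Submodule.zero_mem _, fun _ _ => rfl⟩

lemma restrict_range {P X E : GMod A} {K : Submodule A.carrier P.carrier}
    {ι : X.carrier →ₗ[A.carrier] E.carrier} (hι : ι ∈ ghomSet X E 0) (hi : Function.Injective ι)
    {d : ℤ} {f : K →ₗ[A.carrier] E.carrier} (hf : HomOn P E K f d)
    (hr : ∀ x, f x ∈ LinearMap.range ι) :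
    ∃ f' : K →ₗ[A.carrier] X.carrier, HomOn P X K f' d ∧ ∀ x, ι (f' x) = f x := by
  let e := LinearEquiv.ofInjective ι hi
  have h1 : ∀ x, ι ((e.symm.toLinearMap ∘ₗ f.codRestrict _ hr) x) = f x := fun x =>
    congrArg Subtype.val (e.apply_symm_apply ⟨f x, hr x⟩)
  refine ⟨e.symm.toLinearMap ∘ₗ f.codRestrict _ hr, fun i x hx => ?_, h1⟩
  refine mem_of_inj hι hi ?_
  rw [h1, add_zero]; exact hf i x hx

/-- Multiplication by a central element. -/
def centralMul {N : GMod A} (c : A.carrier) (hc : ∀ a, c * a = a * c) :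
    N.carrier →ₗ[A.carrier] N.carrier where
  toFun x := c • x
  map_add' := smul_add c
  map_smul' a x := by rw [RingHom.id_apply, smul_smul, smul_smul, hc]

/-- Extending `X` finitely often by `Δ(σ)` makes any finite set of maps from
`ker (P(σ) → Δ(σ))` extendable. -/
lemma extend_finset {X : GMod A} {π σ : Idx} (hX : MultCond S X π) (hσ : σ < π) {J : Type}
    {F : J → (Kr S σ →ₗ[A.carrier] X.carrier)} {deg : J → ℤ}
    (hF : ∀ j, HomOn (S.P σ) X (Kr S σ) (F j) (deg j)) (T : Finset J) :
    ∃ (E : GMod A), ∃ ι ∈ ghomSet X E 0, Function.Injective ι ∧ MultCond S E π ∧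
      (∀ j ∈ T, ∃ g ∈ ghomSet (S.P σ) E (deg j), ∀ x (h : x ∈ Kr S σ), g x = ι (F j ⟨x, h⟩)) ∧
      ∀ σ', ¬ σ' < σ → ∀ d (h : Kr S σ' →ₗ[A.carrier] E.carrier),
        HomOn (S.P σ') E (Kr S σ') h d → ∀ x, h x ∈ LinearMap.range ι := by
  classical
  have := S.noeth
  induction T using Finset.induction_on with
  | empty =>
    exact ⟨X, LinearMap.id, fun i x hx => by rwa [add_zero], Function.injective_id, hX,
      fun j hj => absurd hj (Finset.notMem_empty j), fun _ _ _ h _ x => ⟨h x, rfl⟩⟩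
  | insert j T _ ih =>
    obtain ⟨E, ι, hι, hi, hE, hT, hr⟩ := ih
    obtain ⟨E', ι', hι', u, hu, g, hg, h1, h2, h3, h4, h5⟩ :=
      pushout_ext (X := E) (dm_mem S σ) (dm_surj S σ) (f := ι ∘ₗ F j) (n := deg j)
        (fun i x hx => by
          have := hι _ _ (hF j i x hx)
          rwa [add_zero] at this)
    refine ⟨E', ι' ∘ₗ ι, by have := comp_mem hι hι'; rwa [add_zero] at this, h1.comp hi,
      multCond_ext hE hσ hι' h1 hg h3 h4, fun j' hj' => ?_, fun σ' hσ' d h hh => ?_⟩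
    · rcases Finset.mem_insert.1 hj' with rfl | hj'
      · exact ⟨u, hu, h2⟩
      · obtain ⟨v, hv, hv'⟩ := hT j' hj'
        refine ⟨ι' ∘ₗ v, by have := comp_mem hv hι'; rwa [add_zero] at this, fun x hx => ?_⟩
        rw [LinearMap.comp_apply, hv' x hx]; rfl
    · obtain ⟨C, -, hC⟩ := exists_Kr_bound S σ'
      have h6 := hC (S.Δ σ) (d + -deg j) (fun τ hτ e _ w hw =>
        hom_P_Δ S (fun h => hσ' (hτ.trans_le h)) hw) (g ∘ₗ h) (fun i x hx => by
          rw [← add_assoc]; exact hg _ _ (hh i x hx))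
      obtain ⟨h', hh', hh''⟩ := restrict_range hι' h1 hh (fun x => by
        rw [h4]; exact LinearMap.congr_fun h6 x)
      intro x
      obtain ⟨y, hy⟩ := hr σ' hσ' d h' hh' x
      exact ⟨y, by rw [LinearMap.comp_apply, hy, hh'']⟩

/-- The universal extension: `X` embeds into some `E`, obtained by adding copies of `Δ(σ)`, with
`ext¹(Δ(σ), E) = 0`. -/
lemma universal_ext (hs : A.Spade) {X : GMod A} {π σ : Idx} (hX : MultCond S X π) (hσ : σ < π) :
    ∃ (E : GMod A), ∃ ι ∈ ghomSet X E 0, Function.Injective ι ∧ MultCond S E π ∧ EP S σ E ∧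
      ∀ σ', ¬ σ' < σ → EP S σ' X → EP S σ' E := by
  classical
  have := S.noeth
  obtain ⟨J, _, F, deg, hF, hgen⟩ := hom_finite S.laur hs (S.P σ) X (Kr S σ)
  obtain ⟨E, ι, hι, hi, hE, hT, hr⟩ := extend_finset hX hσ hF Finset.univ
  refine ⟨E, ι, hι, hi, hE, fun d f hf => ?_, fun σ' hσ' hep d f hf => ?_⟩
  · obtain ⟨f', hf', hff'⟩ := restrict_range hι hi hf (hr σ (lt_irrefl σ) d f hf)
    obtain ⟨c, hc, hfc⟩ := hgen f' d hf'
    choose g hg hgF using fun j => hT j (Finset.mem_univ j)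
    let G : (S.P σ).carrier →ₗ[A.carrier] E.carrier := ∑ j, centralMul (c j) (hc j) ∘ₗ g j
    have hG : ∀ x (h : x ∈ Kr S σ), G x = f ⟨x, h⟩ := by
      intro x h
      rw [← hff', hfc, map_sum, LinearMap.sum_apply]
      refine Finset.sum_congr rfl fun j _ => ?_
      rw [map_smul, ← hgF j x h]; rfl
    -- the component of `G` of degree `d` still extends `f`
    obtain ⟨G', hG', hGG'⟩ := exists_comp G d
    refine ⟨G', hG', fun x h => ?_⟩
    have : (G' ∘ₗ (Kr S σ).subtype : (sub (S.P σ) _ (Kr_gr S σ)).carrier →ₗ[A.carrier] _) = f := by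
      refine hom_ext (M := sub (S.P σ) _ (Kr_gr S σ)) fun i y hy => ?_
      show G' y.1 = f y
      rw [hGG' i y.1 hy, hG y.1 y.2]
      exact pr_of_mem E (hf i y hy)
    exact LinearMap.congr_fun this ⟨x, h⟩
  · obtain ⟨f', hf', hff'⟩ := restrict_range hι hi hf (hr σ' hσ' d f hf)
    obtain ⟨g, hg, hgf⟩ := hep d f' hf'
    refine ⟨ι ∘ₗ g, by have := comp_mem hg hι; rwa [add_zero] at this, fun x h => ?_⟩
    rw [LinearMap.comp_apply, hgf x h, hff']

/-- Iterated universal extensions along an upper set of the poset, from the top downwards. -/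
lemma iterated_ext (hs : A.Spade) {V : GMod A} {π : Idx} (hV : MultCond S V π) (n : ℕ) :
    ∀ T : Finset Idx, T.card = n → (∀ σ ∈ T, ∀ τ, σ < τ → τ ∈ T) →
      ∃ (E : GMod A), ∃ ι ∈ ghomSet V E 0, Function.Injective ι ∧ MultCond S E π ∧
        ∀ σ ∈ T, EP S σ E := by
  classical
  induction n with
  | zero =>
    intro T hT _
    rw [Finset.card_eq_zero] at hT
    subst hT
    exact ⟨V, LinearMap.id, fun i x hx => by rwa [add_zero], Function.injective_id, hV,
      fun j hj => absurd hj (Finset.notMem_empty j)⟩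
  | succ n ih =>
    intro T hT hup
    have hne : T.Nonempty := Finset.card_pos.1 (by omega)
    obtain ⟨σ, hσT, hmin⟩ := T.exists_minimal hne
    have hmin' : ∀ τ ∈ T, ¬ τ < σ := fun τ hτ h => absurd (hmin hτ h.le) (not_le_of_gt h)
    obtain ⟨E, ι, hι, hi, hE, hep⟩ := ih (T.erase σ)
      (by rw [Finset.card_erase_of_mem hσT, hT]; rfl) (fun τ hτ ρ hlt => by
        have hτT := Finset.mem_of_mem_erase hτ
        refine Finset.mem_erase.2 ⟨?_, hup τ hτT ρ hlt⟩
        rintro rfl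
        exact hmin' τ hτT hlt)
    by_cases hσ : σ < π
    · obtain ⟨E', ι', hι', hi', hE', h1, h2⟩ := universal_ext hs hE hσ
      refine ⟨E', ι' ∘ₗ ι, by have := comp_mem hι hι'; rwa [add_zero] at this, hi'.comp hi, hE',
        fun τ hτ => ?_⟩
      by_cases h : τ = σ
      · rwa [h]
      · exact h2 τ (hmin' τ hτ) (hep τ (Finset.mem_erase.2 ⟨h, hτ⟩))
    · refine ⟨E, ι, hι, hi, hE, fun τ hτ => ?_⟩
      by_cases h : τ = σ
      · rw [h]; exact ep_of_not_lt hE hσ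
      · exact hep τ (Finset.mem_erase.2 ⟨h, hτ⟩)

end
end Tilt

/-- For an affine quasi-hereditary algebra with property `(♠)`:
every module `V ∈ F_π(Δ)` (i.e. with a `Δ`-filtration with `(V:Δ(π)) = 1` and
`(V:Δ(σ)) = 0` for `σ ≰ π`) embeds into a tilting module `T ∈ T_π`. -/
theorem embedding_into_tilting_module
    {k : Type} [Field k] (A : GAlg k) (hspade : A.Spade)
    (Idx : Type) [Fintype Idx] [PartialOrder Idx] (S : AHW A Idx)
    (π : Idx) (V : GMod A) (hV : MultCond S V π) :
    ∃ T : GMod A, IsTilting S T ∧ MultCond S T π ∧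
      ∃ j : V ⟶ T, Function.Injective j.1 := by
  obtain ⟨T, ι, hι, hi, hT, hep⟩ := Tilt.iterated_ext hspade hV _ Finset.univ rfl
    (fun _ _ τ _ => Finset.mem_univ τ)
  refine ⟨T, ⟨?_, ?_⟩, hT, ⟨ι, fun i x hx => by simpa using hι i x hx⟩, hi⟩
  · obtain ⟨Φ, hΦ, -⟩ := hT
    exact ⟨Φ, hΦ⟩
  · refine Tilt.good_imp_pcFilt fun σ d f hf _ => ?_
    obtain ⟨g, hg, hgf⟩ := hep σ (Finset.mem_univ σ) d f hf
    exact ⟨g, hg, hgf, fun _ => trivial⟩
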